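/- If a Hubbard tree (T,f) has an evil periodic orbit of branch points of exact period m, and its kneading sequence ν is not *-periodic of period less than m, then ν fails the admissibility condition for period m. -/

import Mathlib

/- Common definitions for formalizing "Admissibility of kneading sequences and
structure of Hubbard trees for quadratic polynomials" by Bruin–Schleicher. -/

namespace HubbardTrees

/-- The symbols `0`, `1`, `*` used for itineraries and kneading sequences. -/
inductive Sym : Type
  | zero : Sym
  | one : Sym
  | star : Sym
deriving DecidableEq

/-- `A` is an arc in `X` joining `x` and `y` (a point if `x = y`, otherwise a
homeomorphic image of `[0,1]` with endpoints `x` and `y`). -/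
def IsArcBetween {X : Type*} [TopologicalSpace X] (A : Set X) (x y : X) : Prop :=
  (x = y ∧ A = {x}) ∨
  (x ≠ y ∧ ∃ γ : Path x y, Topology.IsEmbedding ⇑γ ∧ Set.range ⇑γ = A)

/-- The global arms at `x`: the connected components of `X \ {x}`. -/
def arms {X : Type*} [TopologicalSpace X] (x : X) : Set (Set X) :=
  {C | ∃ y, y ≠ x ∧ C = connectedComponentIn {x}ᶜ y}

/-- The global arm at `x` containing `y` (for `y ≠ x`): the component of `X \ {x}`
containing `y`.  Local arms at `x` being germs of global arms, we represent the local
arm at `x` pointing towards `y` by this set. -/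
def armTo {X : Type*} [TopologicalSpace X] (x y : X) : Set X :=
  connectedComponentIn {x}ᶜ y

/-- `x` is an endpoint: it has exactly one arm. -/
def IsEndpoint {X : Type*} [TopologicalSpace X] (x : X) : Prop :=
  (arms x).ncard = 1

/-- `x` is a branch point: it has at least three arms. -/
def IsBranchPt {X : Type*} [TopologicalSpace X] (x : X) : Prop :=
  3 ≤ (arms x).ncard

/-- `f` maps the set `A` homeomorphically onto its image. -/
def MapsHomeoOn {X : Type*} [TopologicalSpace X] (f : X → X) (A : Set X) : Prop :=
  Topology.IsEmbedding (A.restrict f)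

/-- `f` is a local homeomorphism onto its image at `x`. -/
def IsLocalHomeoAt {X : Type*} [TopologicalSpace X] (f : X → X) (x : X) : Prop :=
  ∃ U : Set X, IsOpen U ∧ x ∈ U ∧ Topology.IsEmbedding (U.restrict f)

/-- `g` sends the local arm at `x` represented by the global arm `C` to the local
arm at `g x` represented by `C'` (germ condition: some initial piece of `C` at `x`
is mapped into `C'`). -/
def MapsLocalArm {X : Type*} [TopologicalSpace X] (g : X → X) (x : X) (C C' : Set X) : Prop :=
  C ∈ arms x ∧ C' ∈ arms (g x) ∧ ∃ U ∈ nhds x, g '' (C ∩ U) ⊆ C'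

/-- `z` is periodic under `f` with exact period `n`. -/
def ExactPeriod {Y : Type*} (f : Y → Y) (z : Y) (n : ℕ) : Prop :=
  1 ≤ n ∧ f^[n] z = z ∧ ∀ k, 1 ≤ k → k < n → f^[k] z ≠ z

/-- The first return map `f^[n]` of the fixed point `z` of `f^[n]` permutes all the
local arms at `z` transitively in a single cycle. -/
def ArmsTransitive {X : Type*} [TopologicalSpace X] (f : X → X) (n : ℕ) (z : X) : Prop :=
  ∀ C ∈ arms z, ∀ C' ∈ arms z, ∃ j : ℕ, MapsLocalArm (f^[n * j]) z C C'

/-- An (abstract) Hubbard tree: a finite topological tree `X` together with a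
continuous surjection `f` and a critical point `c0`, subject to the axioms of
Bruin–Schleicher. -/
structure HubbardTree (X : Type*) [TopologicalSpace X] : Type _ where
  /-- the dynamics -/
  f : X → X
  /-- the critical point -/
  c0 : X
  compact : CompactSpace X
  t2 : T2Space X
  conn : ConnectedSpace X
  /-- the unique arc `[x,y]` joining two points -/
  arc : X → X → Set X
  arc_isArc : ∀ x y : X, IsArcBetween (arc x y) x y
  arc_unique : ∀ (x y : X) (A : Set X), IsArcBetween A x y → A = arc x y
  -- finiteness of the tree
  arms_finite : ∀ x : X, (arms x).Finite
  branch_finite : Set.Finite {x : X | IsBranchPt x}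
  endpoint_finite : Set.Finite {x : X | IsEndpoint x}
  cont : Continuous f
  surj : Function.Surjective f
  /-- every point has at most two inverse images -/
  two_preimages : ∀ y : X, ∃ a b : X, f ⁻¹' {y} ⊆ {a, b}
  /-- local homeomorphism onto its image away from the critical point -/
  local_homeo : ∀ x : X, x ≠ c0 → IsLocalHomeoAt f x
  /-- all endpoints lie on the critical orbit -/
  endpoints_on_orbit : ∀ x : X, IsEndpoint x → ∃ k : ℕ, f^[k] c0 = x
  /-- the critical point is periodic or preperiodic -/
  crit_preperiodic : ∃ k n : ℕ, 1 ≤ n ∧ f^[k + n] c0 = f^[k] c0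
  /-- the critical point is not fixed -/
  crit_not_fixed : f c0 ≠ c0
  /-- expansivity -/
  expansive : ∀ x y : X, x ≠ y →
    (IsBranchPt x ∨ ∃ k : ℕ, f^[k] c0 = x) →
    (IsBranchPt y ∨ ∃ k : ℕ, f^[k] c0 = y) →
    ∃ n : ℕ, c0 ∈ f^[n] '' (arc x y)

namespace HubbardTree

variable {X : Type*} [TopologicalSpace X] (H : HubbardTree X)

/-- The critical value `c₁ = f(c₀)`. -/
def c1 : X := H.f H.c0

/-- The component `T₁` of `T \ {c₀}` containing the critical value. -/
def T1 : Set X := connectedComponentIn {H.c0}ᶜ H.c1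

open Classical in
/-- The symbol (`0`, `1` or `*`) attached to a point of the tree. -/
noncomputable def symOf (x : X) : Sym :=
  if x = H.c0 then Sym.star else if x ∈ H.T1 then Sym.one else Sym.zero

/-- The itinerary of `x`: a sequence of symbols, 1-indexed (the value at index `0`
is irrelevant); entry `k ≥ 1` is the symbol of `f^[k-1] x`. -/
noncomputable def itin (x : X) : ℕ → Sym :=
  fun k => H.symOf (H.f^[k - 1] x)

/-- The kneading sequence: the itinerary of the critical value (1-indexed). -/
noncomputable def kneading : ℕ → Sym := H.itin H.c1

/-- `z` is the characteristic point of its periodic orbit: `c₁` lies in one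
component of `X \ {z}` while `c₀` and all other points of the orbit lie in a
different component. -/
def IsCharacteristic (z : X) : Prop :=
  ∃ Cv Cz : Set X, Cv ∈ arms z ∧ Cz ∈ arms z ∧ Cv ≠ Cz ∧
    H.c1 ∈ Cv ∧ H.c0 ∈ Cz ∧ ∀ k : ℕ, H.f^[k] z ≠ z → H.f^[k] z ∈ Cz

/-- The first return map fixes the local arm at `z` pointing to the critical point
and permutes all other local arms transitively in a single cycle. -/
def OtherArmsTransitive (n : ℕ) (z : X) : Prop :=
  ∀ C ∈ arms z, C ≠ armTo z H.c0 → ∀ C' ∈ arms z, C' ≠ armTo z H.c0 →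
    ∃ j : ℕ, MapsLocalArm (H.f^[n * j]) z C C'

/-- `z` is the characteristic point of an evil periodic orbit of branch points of
exact period `n`. -/
def IsEvilOrbit (z : X) (n : ℕ) : Prop :=
  ExactPeriod H.f z n ∧ (∀ k : ℕ, IsBranchPt (H.f^[k] z)) ∧
    H.IsCharacteristic z ∧ ¬ ArmsTransitive H.f n z

/-- `x` is precritical with `Step(x) = k`: `k ≥ 1` is minimal with `f^[k] x = c₁`. -/
def Step (x : X) (k : ℕ) : Prop :=
  1 ≤ k ∧ H.f^[k] x = H.c1 ∧ ∀ j, 1 ≤ j → j < k → H.f^[j] x ≠ H.c1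

/-- `x` is the closest precritical point `ζ_k`. -/
def IsClosestPrecritical (x : X) (k : ℕ) : Prop :=
  H.Step x k ∧ ∀ j, 1 ≤ j → j < k → H.c1 ∉ H.f^[j] '' (H.arc H.c1 x)

/-- `x` is the earliest precritical point on the set `A`, with `Step(x) = k`:
it is a precritical point on `A` of minimal Step. -/
def IsEarliestPrecriticalOn (A : Set X) (x : X) (k : ℕ) : Prop :=
  x ∈ A ∧ H.Step x k ∧ ∀ y ∈ A, ∀ j : ℕ, H.Step y j → k ≤ j

/-- Marked points: branch points and points of the critical orbit. -/
def MarkedPt (x : X) : Prop :=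
  IsBranchPt x ∨ ∃ k : ℕ, H.f^[k] H.c0 = x

/-- Two marked points are joined by an edge if the arc between them contains no
further marked point. -/
def IsEdge (x y : X) : Prop :=
  H.MarkedPt x ∧ H.MarkedPt y ∧ x ≠ y ∧
    ∀ w ∈ H.arc x y, H.MarkedPt w → w = x ∨ w = y

/-- Equivalence of Hubbard trees: a bijection between the marked points which
conjugates the dynamics and preserves edges. -/
def Equivalent {Y : Type*} [TopologicalSpace Y] (H' : HubbardTree Y) : Prop :=
  ∃ φ : X → Y,
    (∀ x : X, H.MarkedPt x → H'.MarkedPt (φ x)) ∧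
    (∀ x x' : X, H.MarkedPt x → H.MarkedPt x' → φ x = φ x' → x = x') ∧
    (∀ y : Y, H'.MarkedPt y → ∃ x : X, H.MarkedPt x ∧ φ x = y) ∧
    φ H.c0 = H'.c0 ∧
    (∀ x : X, H.MarkedPt x → φ (H.f x) = H'.f (φ x)) ∧
    (∀ x x' : X, H.MarkedPt x → H.MarkedPt x' →
      (H.IsEdge x x' ↔ H'.IsEdge (φ x) (φ x')))

end HubbardTree

/-! ### Combinatorics of kneading sequences -/

/-- The function `ρ_ν(n) = inf { k > n : ν_k ≠ ν_{k-n} } ∈ ℕ ∪ {∞}` (sequences are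
1-indexed). -/
noncomputable def rho (ν : ℕ → Sym) (n : ℕ) : ℕ∞ :=
  sInf {e : ℕ∞ | ∃ j : ℕ, e = (j : ℕ∞) ∧ n < j ∧ ν j ≠ ν (j - n)}

/-- `RhoOrbit ν k m` means that `m` belongs to the `ρ`-orbit
`k → ρ(k) → ρ(ρ(k)) → ⋯` of `k` (stopped before reaching `∞`). -/
inductive RhoOrbit (ν : ℕ → Sym) : ℕ → ℕ → Prop
  | refl (k : ℕ) : RhoOrbit ν k k
  | step {k m j : ℕ} : RhoOrbit ν k m → rho ν m = (j : ℕ∞) → RhoOrbit ν k j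

/-- `m` occurs in the internal address `1 → ρ(1) → ρ(ρ(1)) → ⋯` of `ν`. -/
def InternalAddress (ν : ℕ → Sym) (m : ℕ) : Prop := RhoOrbit ν 1 m

/-- `ν` is a `*`-periodic kneading sequence of (exact) period `n`:
`ν = overline(1 ν₂ … ν_{n-1} *)`. -/
def StarPeriodic (ν : ℕ → Sym) (n : ℕ) : Prop :=
  2 ≤ n ∧ ν 1 = Sym.one ∧ ν n = Sym.star ∧
    (∀ k, 1 ≤ k → ν (k + n) = ν k) ∧
    (∀ k, 1 ≤ k → k < n → ν k ≠ Sym.star)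

/-- `ν` fails the admissibility condition for period `m`. -/
def FailsAdmissibility (ν : ℕ → Sym) (m : ℕ) : Prop :=
  1 ≤ m ∧
  ¬ InternalAddress ν m ∧
  (∀ k : ℕ, k ∣ m → 1 ≤ k → k < m → rho ν k ≤ (m : ℕ∞)) ∧
  ∃ R r : ℕ, rho ν m = (R : ℕ∞) ∧ 1 ≤ r ∧ r ≤ m ∧ r ≡ R [MOD m] ∧ RhoOrbit ν r m

open Classical in
/-- The number `q(m)` of arms predicted by the kneading sequence, where
`ρ(m) = R < ∞` and `r ∈ {1,…,m}` is congruent to `R` modulo `m`. -/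
noncomputable def qArms (ν : ℕ → Sym) (m R r : ℕ) : ℕ :=
  if RhoOrbit ν r m then (R - r) / m + 1 else (R - r) / m + 2


/-! ### Embeddings into the plane and cyclic order of arms -/

/-- Three points in the plane are in (strictly) counterclockwise position. -/
def Ccw (p q r : ℝ × ℝ) : Prop :=
  0 < (q.1 - p.1) * (r.2 - p.2) - (q.2 - p.2) * (r.1 - p.1)

namespace HubbardTree

variable {X : Type*} [TopologicalSpace X] (H : HubbardTree X)

/-- Under an embedding `φ` of the tree into the plane, `p` is a first exit point of
the arm `C` at `x` through the circle of radius `ε` around `φ x`: `p = φ y` for a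
point `y ∈ C` at distance exactly `ε`, such that the arc from `x` to `y` stays
within distance `< ε` before reaching `y`. -/
def ExitPt (φ : X → ℝ × ℝ) (x : X) (C : Set X) (ε : ℝ) (p : ℝ × ℝ) : Prop :=
  ∃ y ∈ C, φ y = p ∧ dist (φ x) p = ε ∧
    ∀ z ∈ H.arc x y, z ≠ y → dist (φ x) (φ z) < ε

/-- The local arms at `x` represented by the arms `C, C', C''` are in
counterclockwise cyclic order under the embedding `φ`. -/
def ArmsCcw (φ : X → ℝ × ℝ) (x : X) (C C' C'' : Set X) : Prop :=
  ∃ ε₀ : ℝ, 0 < ε₀ ∧ ∀ ε : ℝ, 0 < ε → ε < ε₀ →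
    ∀ p p' p'' : ℝ × ℝ, H.ExitPt φ x C ε p → H.ExitPt φ x C' ε p' →
      H.ExitPt φ x C'' ε p'' → Ccw p p' p''

/-- `f` respects the cyclic order (induced by the embedding `φ`) of the local arms
at all branch points. -/
def RespectsCyclicOrder (φ : X → ℝ × ℝ) : Prop :=
  ∀ x : X, IsBranchPt x →
    ∀ C C' C'' : Set X, C ∈ arms x → C' ∈ arms x → C'' ∈ arms x →
      C ≠ C' → C' ≠ C'' → C ≠ C'' → H.ArmsCcw φ x C C' C'' →
      ∀ D D' D'' : Set X, MapsLocalArm H.f x C D → MapsLocalArm H.f x C' D' →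
        MapsLocalArm H.f x C'' D'' → H.ArmsCcw φ (H.f x) D D' D''

/-- The Hubbard tree can be topologically embedded into the plane `ℝ²` so that `f`
respects the cyclic order of the local arms at all branch points. -/
def PlanarEmbeddable : Prop :=
  ∃ φ : X → ℝ × ℝ, Topology.IsEmbedding φ ∧ H.RespectsCyclicOrder φ

end HubbardTree

/-!
Let `z` be the characteristic point of the orbit. Iterating along the orbit, an arm at `z`
towards a point `y` keeps pointing to the image of `y` until the itineraries of `z` and `y` first
differ; at that moment it points to the critical value. From the arm towards `c₁` at `f^r(z)`, the
same happens again and again, at the times of the `ρ`-orbit of `r`, until the return to `z`, where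
the arm points to `c₁` if this orbit hits `m` and to `c₀` otherwise. So every arm at `z` eventually
maps to the arm towards `c₀` or towards `c₁` under the first return map, which is injective on
arms. If the arm towards `c₀` were sent to the one towards `c₁`, all arms would form one cycle; an
evil orbit therefore fixes the arm towards `c₀`, whence `m` is not in the internal address. The
arm towards `c₁` then never reaches the one towards `c₀`, and it is not fixed since `z` has three
arms. Hence `ν` and the itinerary of `z` differ first at some index beyond `m`; this index is
`ρ(m)`, and the `ρ`-orbit of its residue contains `m`.
-/

/-! ### Arms and endpoints -/

section Arms

variable {X : Type*} [TopologicalSpace X]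

theorem notMem_armTo (x y : X) : x ∉ armTo x y := fun h =>
  connectedComponentIn_subset _ _ h rfl

theorem ne_of_mem_armTo {x y w : X} (h : w ∈ armTo x y) : w ≠ x :=
  ne_of_mem_of_not_mem h (notMem_armTo x y)

theorem mem_armTo_self {x y : X} (h : y ≠ x) : y ∈ armTo x y := mem_connectedComponentIn h

theorem armTo_self (x : X) : armTo x x = ∅ :=
  connectedComponentIn_eq_empty fun h => h rfl

theorem armTo_eq_of_mem {x y w : X} (h : w ∈ armTo x y) : armTo x w = armTo x y :=
  (connectedComponentIn_eq h).symm

theorem mem_armTo_iff {x y w : X} (hw : w ≠ x) : w ∈ armTo x y ↔ armTo x w = armTo x y :=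
  ⟨armTo_eq_of_mem, fun h => h ▸ mem_armTo_self hw⟩

theorem armTo_mem_arms {x y : X} (h : y ≠ x) : armTo x y ∈ arms x := ⟨y, h, rfl⟩

theorem eq_armTo_of_mem_arms {x a : X} {C : Set X} (hC : C ∈ arms x) (ha : a ∈ C) :
    C = armTo x a := by
  obtain ⟨y, -, rfl⟩ := hC
  exact (armTo_eq_of_mem ha).symm

theorem isPreconnected_armTo (x y : X) : IsPreconnected (armTo x y) :=
  isPreconnected_connectedComponentIn

theorem subset_armTo {x y : X} {S : Set X} (hS : IsPreconnected S) (hx : x ∉ S) (hy : y ∈ S) :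
    S ⊆ armTo x y :=
  hS.subset_connectedComponentIn hy (Set.subset_compl_singleton_iff.2 hx)

theorem armTo_eq_of_isPreconnected {x y w : X} {S : Set X} (hS : IsPreconnected S) (hx : x ∉ S)
    (hy : y ∈ S) (hw : w ∈ S) : armTo x y = armTo x w :=
  (armTo_eq_of_mem (subset_armTo hS hx hy hw)).symm

theorem closure_armTo_subset (x y : X) : closure (armTo x y) ⊆ insert x (armTo x y) := by
  rcases eq_or_ne y x with rfl | hy
  · simp [armTo_self]
  have hconn : IsPreconnected (closure (armTo x y) \ {x}) :=
    (isPreconnected_armTo x y).subset_closure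
      (fun _ h => ⟨subset_closure h, ne_of_mem_armTo h⟩) Set.sdiff_subset
  intro w hw
  rcases eq_or_ne w x with rfl | hwx
  · exact Set.mem_insert _ _
  · exact .inr (subset_armTo hconn (fun h => h.2 rfl)
      ⟨subset_closure (mem_armTo_self hy), hy⟩ ⟨hw, hwx⟩)

theorem compl_armTo_eq_biUnion_closure {x y : X} (hy : y ≠ x) :
    (armTo x y)ᶜ = {x} ∪ ⋃ C ∈ arms x \ {armTo x y}, closure C := by
  ext w
  rcases eq_or_ne w x with rfl | hw
  · simp [notMem_armTo]
  simp only [Set.mem_compl_iff, Set.mem_union, Set.mem_singleton_iff, hw, false_or,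
    Set.mem_iUnion, exists_prop]
  constructor
  · intro hwy
    exact ⟨armTo x w, ⟨armTo_mem_arms hw, fun h => hwy ((mem_armTo_iff hw).2 h)⟩,
      subset_closure (mem_armTo_self hw)⟩
  · rintro ⟨_, ⟨⟨a, -, rfl⟩, hne⟩, hwC⟩ hwy
    have hwa : w ∈ armTo x a := (closure_armTo_subset x a hwC).resolve_left hw
    exact hne ((armTo_eq_of_mem hwa).symm.trans (armTo_eq_of_mem hwy))

theorem isOpen_armTo [T1Space X] {x : X} (hfin : (arms x).Finite) (y : X) :
    IsOpen (armTo x y) := by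
  rcases eq_or_ne y x with rfl | hy
  · simp [armTo_self]
  rw [← isClosed_compl_iff, compl_armTo_eq_biUnion_closure hy]
  exact isClosed_singleton.union (hfin.sdiff.isClosed_biUnion fun _ _ => isClosed_closure)

theorem self_mem_closure_armTo [T1Space X] [ConnectedSpace X] {x y : X} (hfin : (arms x).Finite)
    (hy : y ≠ x) : x ∈ closure (armTo x y) := by
  by_contra hx
  have hclosed : IsClosed (armTo x y) := isClosed_of_closure_subset fun w hw =>
    (closure_armTo_subset x y hw).resolve_left fun h => hx (h ▸ hw)
  have huniv := IsClopen.eq_univ ⟨hclosed, isOpen_armTo hfin y⟩ ⟨y, mem_armTo_self hy⟩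
  exact notMem_armTo x y (huniv ▸ Set.mem_univ x)

theorem isPreconnected_insert_armTo [T1Space X] [ConnectedSpace X] {x : X}
    (hfin : (arms x).Finite) (y : X) : IsPreconnected (insert x (armTo x y)) := by
  rcases eq_or_ne y x with rfl | hy
  · simpa only [armTo_self, insert_empty_eq] using isPreconnected_singleton
  · exact (isPreconnected_armTo x y).subset_closure (Set.subset_insert _ _)
      (Set.insert_subset (self_mem_closure_armTo hfin hy) subset_closure)

theorem insert_armTo_subset [T1Space X] [ConnectedSpace X] {p q a : X} (hfin : (arms q).Finite)
    (hpq : p ≠ q) (hp : p ∉ armTo q a) : insert q (armTo q a) ⊆ armTo p q :=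
  subset_armTo (isPreconnected_insert_armTo hfin a) (not_or.2 ⟨hpq, hp⟩) (Set.mem_insert _ _)

theorem insert_armTo_subset_of_notMem [T1Space X] [ConnectedSpace X] {p q r : X}
    (hfin : (arms q).Finite) (hrq : r ≠ q) (hr : r ∉ armTo q p) :
    insert q (armTo q p) ⊆ armTo r p := by
  rcases eq_or_ne p q with rfl | hpq
  · simpa only [armTo_self, insert_empty_eq, Set.singleton_subset_iff] using
      mem_armTo_self hrq.symm
  · have hsub := insert_armTo_subset hfin hrq hr
    rwa [armTo_eq_of_mem (hsub (Set.mem_insert_of_mem _ (mem_armTo_self hpq)))]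

theorem isEndpoint_of_subsingleton_arms {x y : X} (hy : y ≠ x) (h : (arms x).Subsingleton) :
    IsEndpoint x :=
  Set.ncard_eq_one.2 ⟨armTo x y, h.eq_singleton_of_mem (armTo_mem_arms hy)⟩

theorem IsEndpoint.subsingleton_arms {x : X} (h : IsEndpoint x) : (arms x).Subsingleton := by
  obtain ⟨C, hC⟩ := Set.ncard_eq_one.1 h
  exact hC ▸ Set.subsingleton_singleton

end Arms

section Extremal

theorem exists_le_maximal_of_isCompact {α : Type*} [TopologicalSpace α] [Preorder α]
    [ClosedIciTopology α] {K : Set α} (hK : IsCompact K) {a : α} (ha : a ∈ K) :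
    ∃ b, a ≤ b ∧ Maximal (· ∈ K) b := by
  refine zorn_le_nonempty₀ K (fun c hcK hc y hy => ?_) a ha
  have hfip : (K ∩ ⋂ i : c, Set.Ici (i : α)).Nonempty := by
    refine hK.inter_iInter_nonempty _ (fun _ => isClosed_Ici) fun u => ?_
    have : Nonempty c := ⟨⟨y, hy⟩⟩
    obtain ⟨m, hm⟩ := (directedOn_iff_directed.1 hc.directedOn).finset_le u
    exact ⟨m, hcK m.2, Set.mem_iInter₂.2 hm⟩
  obtain ⟨b, hbK, hb⟩ := hfip
  exact ⟨b, hbK, fun w hw => Set.mem_iInter.1 hb ⟨w, hw⟩⟩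

variable {X : Type*} [TopologicalSpace X] [T1Space X] [ConnectedSpace X]

-- Preorder `X` away from `p`: here `q ≤ q'` means that `q'` is not on the `p`-side of `q`.
theorem exists_forall_mem_armTo (hfin : ∀ x : X, (arms x).Finite) {K : Set X} (hK : IsCompact K)
    (p : X) {q₀ : X} (hq₀ : q₀ ∈ K) :
    ∃ q ∈ K, q ∉ armTo q₀ p ∧ ∀ q' ∈ K, q' ≠ q → q' ∈ armTo q p := by
  let _ : Preorder X :=
    { le q q' := q' ∉ armTo q p
      le_refl q := notMem_armTo q p
      le_trans q r s hqr hrs := by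
        rcases eq_or_ne r q with rfl | hne
        · exact hrs
        · exact fun hs => hrs (insert_armTo_subset_of_notMem (hfin q) hne hqr (.inr hs)) }
  have : ClosedIciTopology X := ⟨fun q => (isOpen_armTo (hfin q) p).isClosed_compl⟩
  obtain ⟨q, hq₀q, hq⟩ := exists_le_maximal_of_isCompact hK hq₀
  refine ⟨q, hq.prop, hq₀q, fun q' hq' hne => ?_⟩
  by_contra hqq'
  exact hq.2 hq' hqq' (insert_armTo_subset_of_notMem (hfin q) hne hqq' (Set.mem_insert _ _))

theorem exists_isEndpoint_notMem_armTo [CompactSpace X] (hfin : ∀ x : X, (arms x).Finite)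
    {p x : X} (hxp : x ≠ p) : ∃ e, IsEndpoint e ∧ e ∉ armTo x p := by
  obtain ⟨e, -, hex, he⟩ := exists_forall_mem_armTo hfin isCompact_univ p (Set.mem_univ x)
  have hep : e ≠ p := by
    rintro rfl
    exact hex (mem_armTo_self hxp.symm)
  refine ⟨e, isEndpoint_of_subsingleton_arms hep.symm ?_, hex⟩
  rintro _ ⟨a, ha, rfl⟩ _ ⟨b, hb, rfl⟩
  exact (armTo_eq_of_mem (he a (Set.mem_univ a) ha)).trans
    (armTo_eq_of_mem (he b (Set.mem_univ b) hb)).symm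

theorem exists_isEndpoint_mem_armTo [CompactSpace X] (hfin : ∀ x : X, (arms x).Finite)
    {p x : X} (hxp : x ≠ p) : ∃ e ∈ armTo p x, IsEndpoint e := by
  obtain ⟨e, he, hex⟩ := exists_isEndpoint_notMem_armTo hfin hxp
  refine ⟨e, ?_, he⟩
  rcases eq_or_ne e x with rfl | hne
  · exact mem_armTo_self hxp
  · have hp : p ∉ armTo x e := fun h => hex ((mem_armTo_iff hne).2 (armTo_eq_of_mem h).symm)
    exact insert_armTo_subset (hfin x) hxp.symm hp (.inr (mem_armTo_self hne))

end Extremal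

/-! ### Finite trees -/

open Set in
theorem injOn_Icc_of_image_inter_subset {α β : Type*} [LinearOrder α] {σ : α → β} {a b c : α}
    (hab : InjOn σ (Icc a b)) (hbc : InjOn σ (Icc b c))
    (hmeet : σ '' Icc a b ∩ σ '' Icc b c ⊆ {σ b}) : InjOn σ (Icc a c) := by
  have key : ∀ s t, a ≤ s → s ≤ b → b ≤ t → t ≤ c → σ s = σ t → s = t := by
    intro s t has hsb hbt htc hst
    have hs : σ s = σ b := hmeet ⟨⟨s, ⟨has, hsb⟩, rfl⟩, t, ⟨hbt, htc⟩, hst.symm⟩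
    exact (hab ⟨has, hsb⟩ ⟨has.trans hsb, le_rfl⟩ hs).trans
      (hbc ⟨le_rfl, hbt.trans htc⟩ ⟨hbt, htc⟩ (hs.symm.trans hst))
  intro s hs t ht hst
  rcases le_total s b with hsb | hsb <;> rcases le_total t b with htb | htb
  · exact hab ⟨hs.1, hsb⟩ ⟨ht.1, htb⟩ hst
  · exact key s t hs.1 hsb htb ht.2 hst
  · exact (key t s ht.1 htb hsb hs.2 hst.symm).symm
  · exact hbc ⟨hsb, hs.2⟩ ⟨htb, ht.2⟩ hst

/-- A finite topological tree: a compact Hausdorff space in which any two points `x`, `y` are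
joined by a unique arc `arc x y`, with finitely many endpoints and finitely many arms at every
point. -/
structure FiniteTree (X : Type*) [TopologicalSpace X] : Type _ where
  compact : CompactSpace X
  t2 : T2Space X
  conn : ConnectedSpace X
  /-- the unique arc `[x,y]` joining two points -/
  arc : X → X → Set X
  arc_isArc : ∀ x y : X, IsArcBetween (arc x y) x y
  arc_unique : ∀ (x y : X) (A : Set X), IsArcBetween A x y → A = arc x y
  arms_finite : ∀ x : X, (arms x).Finite
  endpoint_finite : Set.Finite {x : X | IsEndpoint x}

namespace FiniteTree

open Set Topology

variable {X : Type*} [TopologicalSpace X] (T : FiniteTree X)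

theorem arc_self (x : X) : T.arc x x = {x} :=
  (T.arc_unique x x {x} (Or.inl ⟨rfl, rfl⟩)).symm

theorem exists_param (T : FiniteTree X) (x y : X) : ∃ (γ : ℝ → X) (b : ℝ), 0 ≤ b ∧ Continuous γ ∧
    InjOn γ (Icc 0 b) ∧ γ 0 = x ∧ γ b = y := by
  rcases T.arc_isArc x y with ⟨rfl, -⟩ | ⟨-, γ, hγ, -⟩
  · exact ⟨fun _ => x, 0, le_rfl, continuous_const, by simp, rfl, rfl⟩
  · refine ⟨γ.extend, 1, zero_le_one, γ.continuous_extend, ?_, γ.extend_zero, γ.extend_one⟩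
    intro s hs t ht hst
    rw [Path.extend_apply _ hs, Path.extend_apply _ ht] at hst
    exact congrArg Subtype.val (hγ.injective hst)

theorem arc_eq_image_Icc {γ : ℝ → X} {a b : ℝ} (hab : a ≤ b) (hγ : ContinuousOn γ (Icc a b))
    (hinj : InjOn γ (Icc a b)) : T.arc (γ a) (γ b) = γ '' Icc a b := by
  have := T.t2
  rcases hab.eq_or_lt with rfl | hlt
  · simp [arc_self]
  let φ := (iccHomeoI a b hlt).symm
  let P : Path (γ a) (γ b) :=
    { toFun := (Icc a b).domRestrict γ ∘ φ
      continuous_toFun := hγ.domRestrict.comp φ.continuous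
      source' := by simp [φ]
      target' := by simp [φ] }
  have hP : ⇑P = (Icc a b).domRestrict γ ∘ φ := rfl
  refine (T.arc_unique _ _ _ (Or.inr ⟨?_, P, ?_, ?_⟩)).symm
  · exact fun h => hlt.ne (hinj (left_mem_Icc.2 hab) (right_mem_Icc.2 hab) h)
  · exact (P.continuous.isClosedEmbedding (hP ▸ hinj.injective.comp φ.injective)).isEmbedding
  · rw [hP, φ.surjective.range_comp, range_domRestrict]

theorem left_mem_arc (x y : X) : x ∈ T.arc x y := by
  obtain ⟨γ, b, hb, hγ, hinj, rfl, rfl⟩ := T.exists_param x y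
  rw [T.arc_eq_image_Icc hb hγ.continuousOn hinj]
  exact mem_image_of_mem γ (left_mem_Icc.2 hb)

theorem right_mem_arc (x y : X) : y ∈ T.arc x y := by
  obtain ⟨γ, b, hb, hγ, hinj, rfl, rfl⟩ := T.exists_param x y
  rw [T.arc_eq_image_Icc hb hγ.continuousOn hinj]
  exact mem_image_of_mem γ (right_mem_Icc.2 hb)

theorem isPreconnected_arc (x y : X) : IsPreconnected (T.arc x y) := by
  obtain ⟨γ, b, hb, hγ, hinj, rfl, rfl⟩ := T.exists_param x y
  rw [T.arc_eq_image_Icc hb hγ.continuousOn hinj]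
  exact isPreconnected_Icc.image _ hγ.continuousOn

theorem isClosed_arc (x y : X) : IsClosed (T.arc x y) := by
  have := T.t2
  obtain ⟨γ, b, hb, hγ, hinj, rfl, rfl⟩ := T.exists_param x y
  rw [T.arc_eq_image_Icc hb hγ.continuousOn hinj]
  exact (isCompact_Icc.image hγ).isClosed

theorem arc_comm (x y : X) : T.arc x y = T.arc y x := by
  obtain ⟨γ, b, hb, hγ, hinj, rfl, rfl⟩ := T.exists_param x y
  have hrev : InjOn (fun t => γ (b - t)) (Icc 0 b) := fun s hs t ht hst => by
    have := hinj ⟨by linarith [hs.2], by linarith [hs.1]⟩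
      ⟨by linarith [ht.2], by linarith [ht.1]⟩ hst
    linarith
  have harc := T.arc_eq_image_Icc hb (by fun_prop) hrev
  simp only [sub_zero, sub_self] at harc
  rw [harc, T.arc_eq_image_Icc hb hγ.continuousOn hinj, ← image_image γ (fun t => b - t),
    image_const_sub_Icc, sub_self, sub_zero]

theorem arc_subset_arc_right {x y w : X} (hw : w ∈ T.arc x y) : T.arc w y ⊆ T.arc x y := by
  obtain ⟨γ, b, hb, hγ, hinj, rfl, rfl⟩ := T.exists_param x y
  rw [T.arc_eq_image_Icc hb hγ.continuousOn hinj] at hw ⊢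
  obtain ⟨t, ht, rfl⟩ := hw
  have hsub : Icc t b ⊆ Icc 0 b := Icc_subset_Icc_left ht.1
  rw [T.arc_eq_image_Icc ht.2 hγ.continuousOn (hinj.mono hsub)]
  exact image_mono hsub

theorem arc_subset_arc_left {x y w : X} (hw : w ∈ T.arc x y) : T.arc x w ⊆ T.arc x y := by
  rw [T.arc_comm x y] at hw ⊢
  exact T.arc_comm x w ▸ T.arc_subset_arc_right hw

theorem left_notMem_arc_of_mem_arc {x y w : X} (hw : w ∈ T.arc x y) (hwx : w ≠ x) :
    x ∉ T.arc w y := by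
  obtain ⟨γ, b, hb, hγ, hinj, rfl, rfl⟩ := T.exists_param x y
  rw [T.arc_eq_image_Icc hb hγ.continuousOn hinj] at hw
  obtain ⟨t, ht, rfl⟩ := hw
  rw [T.arc_eq_image_Icc ht.2 hγ.continuousOn (hinj.mono (Icc_subset_Icc_left ht.1))]
  rintro ⟨s, hs, hs0⟩
  obtain rfl : s = 0 := hinj ⟨ht.1.trans hs.1, hs.2⟩ (left_mem_Icc.2 hb) hs0
  exact hwx (congrArg γ (le_antisymm hs.1 ht.1))

theorem eq_of_mem_arc_of_mem_arc {x p q : X} (hp : p ∈ T.arc x q) (hq : q ∈ T.arc x p) :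
    p = q := by
  rw [T.arc_comm] at hp
  by_contra hne
  exact T.left_notMem_arc_of_mem_arc hp hne (T.arc_comm x p ▸ hq)

theorem exists_mem_arc_inter_subset_singleton {K : Set X} (hK : IsClosed K) (x : X) {y : X}
    (hy : y ∈ K) : ∃ w ∈ K, w ∈ T.arc x y ∧ T.arc x w ∩ K ⊆ {w} := by
  obtain ⟨γ, b, hb, hγ, hinj, rfl, rfl⟩ := T.exists_param x y
  obtain ⟨t, ⟨ht, htK⟩, hmin⟩ := (isCompact_Icc.inter_right (hK.preimage hγ)).exists_isLeast
    ⟨b, right_mem_Icc.2 hb, hy⟩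
  have hsub : Icc 0 t ⊆ Icc 0 b := Icc_subset_Icc_right ht.2
  refine ⟨γ t, htK, ?_, ?_⟩
  · rw [T.arc_eq_image_Icc hb hγ.continuousOn hinj]
    exact mem_image_of_mem γ ht
  · rw [T.arc_eq_image_Icc ht.1 hγ.continuousOn (hinj.mono hsub)]
    rintro _ ⟨⟨s, hs, rfl⟩, hsK⟩
    exact congrArg γ (le_antisymm hs.2 (hmin ⟨hsub hs, hsK⟩))

theorem arc_eq_union_of_inter_subset_singleton {x w y : X}
    (h : T.arc x w ∩ T.arc w y ⊆ {w}) : T.arc x y = T.arc x w ∪ T.arc w y := by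
  obtain ⟨γ, b, hb, hγ, hγi, rfl, hγb⟩ := T.exists_param x w
  obtain ⟨δ, d, hd, hδ, hδi, hδ0, rfl⟩ := T.exists_param w y
  subst hγb
  rw [← hδ0, T.arc_eq_image_Icc hd hδ.continuousOn hδi, hδ0,
    T.arc_eq_image_Icc hb hγ.continuousOn hγi] at h ⊢
  let σ : ℝ → X := fun u => if u ≤ b then γ u else δ (u - b)
  have hσγ : ∀ u ≤ b, σ u = γ u := fun u hu => if_pos hu
  have hσδ : ∀ u, b ≤ u → σ u = δ (u - b) := fun u hu => by
    rcases hu.eq_or_lt with rfl | hlt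
    · rw [hσγ b le_rfl, sub_self, hδ0]
    · exact if_neg hlt.not_ge
  have hσ : Continuous σ := hγ.if_le (by fun_prop) continuous_id continuous_const
    (by rintro u rfl; simp [hδ0])
  have himγ : σ '' Icc 0 b = γ '' Icc 0 b := image_congr fun u hu => hσγ u hu.2
  have himδ : σ '' Icc b (b + d) = δ '' Icc 0 d := by
    rw [image_congr fun u hu => hσδ u hu.1, ← image_image δ (fun u => u - b),
      image_sub_const_Icc, sub_self, add_sub_cancel_left]
  have hinj : InjOn σ (Icc 0 (b + d)) := by
    refine injOn_Icc_of_image_inter_subset (b := b) ?_ ?_ (by rwa [himγ, himδ, hσγ b le_rfl])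
    · exact hγi.congr fun u hu => (hσγ u hu.2).symm
    · refine InjOn.congr (f₁ := fun u => δ (u - b)) ?_ fun u hu => (hσδ u hu.1).symm
      exact hδi.comp sub_left_injective.injOn fun u hu =>
        ⟨sub_nonneg.2 hu.1, sub_le_iff_le_add'.2 hu.2⟩
  have harc := T.arc_eq_image_Icc (add_nonneg hb hd) hσ.continuousOn hinj
  rwa [hσγ 0 hb, hσδ _ (le_add_of_nonneg_right hd), add_sub_cancel_left,
    ← Icc_union_Icc_eq_Icc hb (le_add_of_nonneg_right hd), image_union, himγ, himδ] at harc

theorem exists_median (x y z : X) : ∃ w, w ∈ T.arc x y ∧ w ∈ T.arc y z ∧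
    T.arc x z = T.arc x w ∪ T.arc w z := by
  obtain ⟨w, hwyz, hwxy, hw⟩ :=
    T.exists_mem_arc_inter_subset_singleton (T.isClosed_arc y z) x (T.left_mem_arc y z)
  exact ⟨w, hwxy, hwyz, T.arc_eq_union_of_inter_subset_singleton
    ((inter_subset_inter_right _ (T.arc_subset_arc_right hwyz)).trans hw)⟩

theorem arc_subset_union (x y z : X) : T.arc x z ⊆ T.arc x y ∪ T.arc y z := by
  obtain ⟨w, hwxy, hwyz, hw⟩ := T.exists_median x y z
  exact hw ▸ union_subset_union (T.arc_subset_arc_left hwxy) (T.arc_subset_arc_right hwyz)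

theorem exists_isEndpoint_mem_arc {p x : X} (hxp : x ≠ p) :
    ∃ e, IsEndpoint e ∧ x ∈ T.arc p e := by
  have := T.compact
  have := T.t2
  have := T.conn
  obtain ⟨e, he, hex⟩ := exists_isEndpoint_notMem_armTo T.arms_finite hxp
  refine ⟨e, he, ?_⟩
  by_contra hx
  exact hex (subset_armTo (T.isPreconnected_arc p e) hx (T.left_mem_arc p e)
    (T.right_mem_arc p e))

-- The tree is the union of the finitely many arcs from `p` to the endpoints, and each of them,
-- with `p` removed, lies entirely on one side of `p`.
theorem isClosed_insert_setOf_forall_notMem_arc {p : X} {S : X → Prop}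
    (hS : ∀ u v, p ∉ T.arc u v → S u → S v) : IsClosed (insert p {u | S u}) := by
  have heq : insert p {u | S u} =
      {p} ∪ ⋃ e ∈ {e | IsEndpoint e} ∩ {e | S e}, T.arc p e := by
    ext u
    rcases eq_or_ne u p with rfl | hup
    · simp
    simp only [mem_insert_iff, hup, false_or, mem_ofPred_eq, mem_union, mem_singleton_iff,
      mem_iUnion, mem_inter_iff, exists_prop]
    constructor
    · intro hu
      obtain ⟨e, he, hue⟩ := T.exists_isEndpoint_mem_arc hup
      exact ⟨e, ⟨he, hS u e (T.left_notMem_arc_of_mem_arc hue hup) hu⟩, hue⟩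
    · rintro ⟨e, ⟨-, he⟩, hue⟩
      exact hS e u (T.arc_comm e u ▸ T.left_notMem_arc_of_mem_arc hue hup) he
  have := T.t2
  rw [heq]
  exact isClosed_singleton.union
    ((T.endpoint_finite.inter_of_left _).isClosed_biUnion fun e _ => T.isClosed_arc p e)

theorem armTo_ne_of_mem_arc {x y p : X} (hp : p ∈ T.arc x y) (hpx : p ≠ x) (hpy : p ≠ y) :
    armTo p x ≠ armTo p y := by
  intro heq
  have htrans : ∀ u v, p ∉ T.arc u v → p ∉ T.arc x u → p ∉ T.arc x v := fun u v huv hxu hxv =>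
    (T.arc_subset_union x u v hxv).elim hxu huv
  have hclosed := T.isClosed_insert_setOf_forall_notMem_arc (S := fun u => p ∉ T.arc x u) htrans
  have hclosed' := T.isClosed_insert_setOf_forall_notMem_arc (S := fun u => p ∈ T.arc x u)
    fun u v huv hxu => by_contra fun hxv => htrans v u (T.arc_comm u v ▸ huv) hxv hxu
  have hx : p ∉ T.arc x x := by rwa [arc_self]
  obtain ⟨w, hw, hw₁, hw₂⟩ := isPreconnected_closed_iff.1 (isPreconnected_armTo p x) _ _
    hclosed hclosed' (fun w _ => (em (p ∈ T.arc x w)).symm.imp .inr .inr)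
    ⟨x, mem_armTo_self hpx.symm, .inr hx⟩ ⟨y, heq ▸ mem_armTo_self hpy.symm, .inr hp⟩
  have hwp := ne_of_mem_armTo hw
  exact hw₁.resolve_left hwp (hw₂.resolve_left hwp)

theorem armTo_eq_of_notMem_arc {p x y : X} (h : p ∉ T.arc x y) : armTo p x = armTo p y :=
  armTo_eq_of_isPreconnected (T.isPreconnected_arc x y) h (T.left_mem_arc x y)
    (T.right_mem_arc x y)

theorem mem_arc_of_armTo_ne {p x y : X} (h : armTo p x ≠ armTo p y) : p ∈ T.arc x y :=
  not_imp_comm.1 T.armTo_eq_of_notMem_arc h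

theorem armTo_eq_of_mem_arc {x y w : X} (hw : w ∈ T.arc x y) (hwx : w ≠ x) :
    armTo x w = armTo x y :=
  T.armTo_eq_of_notMem_arc (T.left_notMem_arc_of_mem_arc hw hwx)

theorem notMem_arc_of_isEndpoint {e x y : X} (he : IsEndpoint e) (hx : x ≠ e) (hy : y ≠ e) :
    e ∉ T.arc x y := fun h =>
  T.armTo_ne_of_mem_arc h hx.symm hy.symm
    (he.subsingleton_arms (armTo_mem_arms hx) (armTo_mem_arms hy))

theorem exists_ne_mem_arc_mem_arc {p x y : X} (h : p ∉ T.arc x y) :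
    ∃ w ≠ p, w ∈ T.arc p x ∧ w ∈ T.arc p y := by
  obtain ⟨w, hwx, hwxy, hw⟩ := T.exists_median p x y
  exact ⟨w, ne_of_mem_of_not_mem hwxy h, hwx, hw ▸ .inl (T.right_mem_arc p w)⟩

theorem exists_armTo_ne_of_injOn_nhds (T : FiniteTree X) {σ : ℝ → X} {a b t : ℝ}
    (hσ : ContinuousOn σ (Icc a b)) (ht : t ∈ Ioo a b) {U : Set ℝ} (hU : U ∈ 𝓝 t)
    (hinj : InjOn σ U) :
    ∃ l ∈ Icc a b, ∃ r ∈ Icc a b, σ l ≠ σ t ∧ σ r ≠ σ t ∧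
      armTo (σ t) (σ l) ≠ armTo (σ t) (σ r) := by
  obtain ⟨ε, hε, hsub⟩ := Metric.nhds_basis_closedBall.mem_iff.1
    (Filter.inter_mem hU (Icc_mem_nhds ht.1 ht.2))
  rw [Real.closedBall_eq_Icc, subset_inter_iff] at hsub
  have hinj := hinj.mono hsub.1
  have hl : t - ε ∈ Icc (t - ε) (t + ε) := by constructor <;> linarith
  have hm : t ∈ Icc (t - ε) (t + ε) := by constructor <;> linarith
  have hr : t + ε ∈ Icc (t - ε) (t + ε) := by constructor <;> linarith
  have hnel : σ (t - ε) ≠ σ t := fun h => by linarith [hinj hl hm h]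
  have hner : σ (t + ε) ≠ σ t := fun h => by linarith [hinj hr hm h]
  have hmem : σ t ∈ T.arc (σ (t - ε)) (σ (t + ε)) := by
    rw [T.arc_eq_image_Icc (by linarith) (hσ.mono hsub.2) hinj]
    exact mem_image_of_mem σ hm
  exact ⟨t - ε, hsub.2 hl, t + ε, hsub.2 hr, hnel, hner,
    T.armTo_ne_of_mem_arc hmem hnel.symm hner.symm⟩

-- A closed path has a point farthest from its base, and at that point it has to turn back.
theorem ne_of_locally_injOn (T : FiniteTree X) {σ : ℝ → X} {a b : ℝ} (hab : a < b)
    (hσ : ContinuousOn σ (Icc a b)) (hloc : ∀ t ∈ Ioo a b, ∃ U ∈ 𝓝 t, InjOn σ U) :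
    σ a ≠ σ b := by
  have := T.t2
  have := T.conn
  have hlocal : ∀ t ∈ Ioo a b, ∃ l ∈ Icc a b, ∃ r ∈ Icc a b, σ l ≠ σ t ∧ σ r ≠ σ t ∧
      armTo (σ t) (σ l) ≠ armTo (σ t) (σ r) := fun t ht =>
    have ⟨_, hU, hinj⟩ := hloc t ht
    T.exists_armTo_ne_of_injOn_nhds hσ ht hU hinj
  intro heq
  obtain ⟨t₀, ht₀, hne⟩ : ∃ t ∈ Icc a b, σ t ≠ σ a := by
    by_contra! hconst
    have hmid : (a + b) / 2 ∈ Ioo a b := by constructor <;> linarith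
    obtain ⟨l, hl, -, -, hnel, -⟩ := hlocal _ hmid
    exact hnel ((hconst l hl).trans (hconst _ (Ioo_subset_Icc_self hmid)).symm)
  obtain ⟨_, ⟨t, ht, rfl⟩, hfar, hmax⟩ := exists_forall_mem_armTo T.arms_finite
    (isCompact_Icc.image_of_continuousOn hσ) (σ a) (mem_image_of_mem σ ht₀)
  have hta : σ t ≠ σ a := by
    intro h
    rw [h] at hfar
    exact hfar (mem_armTo_self hne.symm)
  obtain ⟨l, hl, r, hr, hnel, hner, hsep⟩ := hlocal t
    ⟨lt_of_le_of_ne ht.1 fun h => hta (h ▸ rfl), lt_of_le_of_ne ht.2 fun h => hta (h ▸ heq.symm)⟩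
  exact hsep ((armTo_eq_of_mem (hmax _ (mem_image_of_mem σ hl) hnel)).trans
    (armTo_eq_of_mem (hmax _ (mem_image_of_mem σ hr) hner)).symm)

theorem injOn_of_locally_injOn (T : FiniteTree X) {σ : ℝ → X} {a b : ℝ}
    (hσ : ContinuousOn σ (Icc a b)) (hloc : ∀ t ∈ Ioo a b, ∃ U ∈ 𝓝 t, InjOn σ U) :
    InjOn σ (Icc a b) := by
  have key : ∀ s t, a ≤ s → s < t → t ≤ b → σ s ≠ σ t := fun s t has hst htb =>
    T.ne_of_locally_injOn hst (hσ.mono (Icc_subset_Icc has htb)) fun u hu =>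
      hloc u (Ioo_subset_Ioo has htb hu)
  intro s hs t ht hst
  rcases lt_trichotomy s t with h | h | h
  · exact absurd hst (key s t hs.1 h ht.2)
  · exact h
  · exact absurd hst.symm (key t s ht.1 h hs.2)

theorem injOn_arc_and_image_arc {f : X → X} (hf : Continuous f) {x y : X}
    (hloc : ∀ p ∈ T.arc x y, p ≠ x → p ≠ y → ∃ U ∈ 𝓝 p, InjOn f U) :
    InjOn f (T.arc x y) ∧ f '' T.arc x y = T.arc (f x) (f y) := by
  obtain ⟨γ, b, hb, hγ, hinj, rfl, rfl⟩ := T.exists_param x y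
  have hfγ : InjOn (f ∘ γ) (Icc 0 b) := by
    refine T.injOn_of_locally_injOn (by fun_prop) fun t ht => ?_
    have htI := Ioo_subset_Icc_self ht
    obtain ⟨U, hU, hfU⟩ := hloc (γ t)
      (T.arc_eq_image_Icc hb hγ.continuousOn hinj ▸ mem_image_of_mem γ htI)
      (fun h => ht.1.ne' (hinj htI (left_mem_Icc.2 hb) h))
      fun h => ht.2.ne (hinj htI (right_mem_Icc.2 hb) h)
    exact ⟨γ ⁻¹' U ∩ Icc 0 b, Filter.inter_mem (hγ.continuousAt hU) (Icc_mem_nhds ht.1 ht.2),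
      hfU.comp (hinj.mono inter_subset_right) fun s hs => hs.1⟩
  have himage := T.arc_eq_image_Icc hb (by fun_prop) hfγ
  rw [T.arc_eq_image_Icc hb hγ.continuousOn hinj, ← image_comp]
  exact ⟨hfγ.image_of_comp, himage.symm⟩

end FiniteTree

/-! ### Local dynamics of a Hubbard tree -/

namespace MapsLocalArm

open Set

variable {X : Type*} [TopologicalSpace X] {f g : X → X} {x : X} {C D E : Set X}

theorem refl (hC : C ∈ arms x) : MapsLocalArm id x C C :=
  ⟨hC, hC, univ, Filter.univ_mem, by simp⟩

theorem comp (hf : ContinuousAt f x) (hgD : MapsLocalArm g (f x) D E)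
    (hfC : MapsLocalArm f x C D) : MapsLocalArm (g ∘ f) x C E := by
  obtain ⟨hC, -, U, hU, hfU⟩ := hfC
  obtain ⟨-, hE, V, hV, hgV⟩ := hgD
  refine ⟨hC, hE, U ∩ f ⁻¹' V, Filter.inter_mem hU (hf hV), ?_⟩
  rintro _ ⟨u, ⟨huC, huU, huV⟩, rfl⟩
  exact hgV ⟨f u, ⟨hfU ⟨u, ⟨huC, huU⟩, rfl⟩, huV⟩, rfl⟩

theorem iterate_add (hf : Continuous f) {a b : ℕ} (hC : MapsLocalArm f^[a] x C D)
    (hD : MapsLocalArm f^[b] (f^[a] x) D E) : MapsLocalArm f^[a + b] x C E := by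
  rw [add_comm, Function.iterate_add]
  exact hD.comp (hf.iterate a).continuousAt hC

theorem unique [T1Space X] [ConnectedSpace X] (hfin : (arms x).Finite)
    (hD : MapsLocalArm f x C D) (hE : MapsLocalArm f x C E) : D = E := by
  obtain ⟨⟨y, hy, rfl⟩, hD, U, hU, hfU⟩ := hD
  obtain ⟨-, hE, V, hV, hfV⟩ := hE
  obtain ⟨w, ⟨hwU, hwV⟩, hwC⟩ := mem_closure_iff_nhds.1 (self_mem_closure_armTo hfin hy)
    (U ∩ V) (Filter.inter_mem hU hV)
  rw [eq_armTo_of_mem_arms hD (hfU ⟨w, ⟨hwC, hwU⟩, rfl⟩),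
    eq_armTo_of_mem_arms hE (hfV ⟨w, ⟨hwC, hwV⟩, rfl⟩)]

end MapsLocalArm

namespace HubbardTree

open Set

variable {X : Type*} [TopologicalSpace X] (H : HubbardTree X)

/-- The finite tree underlying a Hubbard tree. -/
abbrev toTree : FiniteTree X where
  compact := H.compact
  t2 := H.t2
  conn := H.conn
  arc := H.arc
  arc_isArc := H.arc_isArc
  arc_unique := H.arc_unique
  arms_finite := H.arms_finite
  endpoint_finite := H.endpoint_finite

theorem c1_ne_c0 : H.c1 ≠ H.c0 := H.crit_not_fixed

theorem injOn_arc_and_image_arc {x y : X} (h : H.c0 ∈ H.toTree.arc x y → H.c0 = x ∨ H.c0 = y) :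
    InjOn H.f (H.toTree.arc x y) ∧
      H.f '' H.toTree.arc x y = H.toTree.arc (H.f x) (H.f y) := by
  refine H.toTree.injOn_arc_and_image_arc H.cont fun p hp hpx hpy => ?_
  obtain ⟨U, hU, hpU, hf⟩ := H.local_homeo p (by rintro rfl; exact (h hp).elim hpx hpy)
  exact ⟨U, hU.mem_nhds hpU, injOn_iff_injective.2 hf.injective⟩

theorem f_ne_f {x y : X} (hxy : x ≠ y) (h : H.c0 ∈ H.toTree.arc x y → H.c0 = x ∨ H.c0 = y) :
    H.f x ≠ H.f y :=
  (H.injOn_arc_and_image_arc h).1.ne (H.toTree.left_mem_arc x y) (H.toTree.right_mem_arc x y) hxy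

theorem exists_armTo_eq_of_ne_c0 {x a : X} (hx : x ≠ H.c0) (ha : a ≠ x) :
    ∃ b ≠ x, armTo x b = armTo x a ∧ (H.c0 ∈ H.toTree.arc x b → H.c0 = b) := by
  by_cases h : H.c0 ∈ H.toTree.arc x a
  · exact ⟨H.c0, hx.symm, H.toTree.armTo_eq_of_mem_arc h hx.symm, fun _ => rfl⟩
  · exact ⟨a, ha, rfl, fun h' => absurd h' h⟩

theorem f_notMem_image_arc {x a u : X} (hx : x ≠ H.c0) (ha : a ≠ x)
    (hc : H.c0 ∈ H.toTree.arc x a → H.c0 = a) (hua : u ∈ armTo x a) (huc : u ∈ armTo H.c0 x) :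
    H.f x ∉ H.f '' H.toTree.arc u a := by
  have hc0xu : H.c0 ∉ H.toTree.arc x u := fun h =>
    H.toTree.armTo_ne_of_mem_arc h hx.symm (ne_of_mem_armTo huc).symm (armTo_eq_of_mem huc).symm
  rintro ⟨p, hp, hpx⟩
  have hpx' : p ≠ x := by
    rintro rfl
    exact H.toTree.armTo_ne_of_mem_arc hp (ne_of_mem_armTo hua).symm ha.symm
      (armTo_eq_of_mem hua)
  refine H.f_ne_f hpx'.symm (fun h => .inr ?_) hpx.symm
  rcases H.toTree.arc_subset_union u x a hp with hpu | hpa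
  · rw [H.toTree.arc_comm] at hpu
    exact absurd (H.toTree.arc_subset_arc_left hpu h) hc0xu
  · obtain rfl := hc (H.toTree.arc_subset_arc_left hpa h)
    exact H.toTree.eq_of_mem_arc_of_mem_arc h hpa

theorem mapsLocalArm_f {x a : X} (hx : x ≠ H.c0) (ha : a ≠ x)
    (hc : H.c0 ∈ H.toTree.arc x a → H.c0 = a) :
    MapsLocalArm H.f x (armTo x a) (armTo (H.f x) (H.f a)) := by
  have := H.t2
  refine ⟨armTo_mem_arms ha, armTo_mem_arms (H.f_ne_f ha.symm fun h => .inr (hc h)).symm,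
    armTo H.c0 x, (isOpen_armTo (H.arms_finite _) x).mem_nhds (mem_armTo_self hx), ?_⟩
  rintro _ ⟨u, ⟨hua, huc⟩, rfl⟩
  exact subset_armTo ((H.toTree.isPreconnected_arc u a).image _ H.cont.continuousOn)
    (H.f_notMem_image_arc hx ha hc hua huc) (mem_image_of_mem _ (H.toTree.right_mem_arc u a))
    (mem_image_of_mem _ (H.toTree.left_mem_arc u a))

theorem armTo_f_ne {x a b : X} (ha : a ≠ x) (hb : b ≠ x)
    (hca : H.c0 ∈ H.toTree.arc x a → H.c0 = a) (hcb : H.c0 ∈ H.toTree.arc x b → H.c0 = b)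
    (hne : armTo x a ≠ armTo x b) :
    armTo (H.f x) (H.f a) ≠ armTo (H.f x) (H.f b) := by
  have hx := H.toTree.mem_arc_of_armTo_ne hne
  obtain ⟨hinj, himage⟩ := H.injOn_arc_and_image_arc (x := a) (y := b) fun h =>
    (H.toTree.arc_subset_union a x b h).imp (fun h => hca (H.toTree.arc_comm a x ▸ h)) hcb
  exact H.toTree.armTo_ne_of_mem_arc (himage ▸ mem_image_of_mem _ hx)
    (hinj.ne hx (H.toTree.left_mem_arc a b) ha.symm)
    (hinj.ne hx (H.toTree.right_mem_arc a b) hb.symm)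

theorem exists_mapsLocalArm_f {x : X} (hx : x ≠ H.c0) {C : Set X} (hC : C ∈ arms x) :
    ∃ D, MapsLocalArm H.f x C D := by
  obtain ⟨a, ha, rfl⟩ := hC
  obtain ⟨b, hb, hba, hc⟩ := H.exists_armTo_eq_of_ne_c0 hx ha
  exact ⟨_, hba ▸ H.mapsLocalArm_f hx hb hc⟩

theorem mapsLocalArm_unique (H : HubbardTree X) {g : X → X} {x : X} {C D E : Set X}
    (hD : MapsLocalArm g x C D) (hE : MapsLocalArm g x C E) : D = E :=
  have := H.t2
  have := H.conn
  hD.unique (H.arms_finite x) hE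

theorem mapsLocalArm_f_injective {x : X} (hx : x ≠ H.c0) {C C' D : Set X}
    (h : MapsLocalArm H.f x C D) (h' : MapsLocalArm H.f x C' D) : C = C' := by
  obtain ⟨a, ha, rfl⟩ := h.1
  obtain ⟨a', ha', rfl⟩ := h'.1
  obtain ⟨b, hb, hba, hc⟩ := H.exists_armTo_eq_of_ne_c0 hx ha
  obtain ⟨b', hb', hba', hc'⟩ := H.exists_armTo_eq_of_ne_c0 hx ha'
  change MapsLocalArm H.f x (armTo x a) D at h
  change MapsLocalArm H.f x (armTo x a') D at h'
  change armTo x a = armTo x a'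
  rw [← hba] at h ⊢
  rw [← hba'] at h' ⊢
  by_contra hne
  refine H.armTo_f_ne hb hb' hc hc' hne ?_
  rw [H.mapsLocalArm_unique (H.mapsLocalArm_f hx hb hc) h,
    H.mapsLocalArm_unique (H.mapsLocalArm_f hx hb' hc') h']

theorem exists_mapsLocalArm_iterate (n : ℕ) {x : X} (hx : ∀ i, H.f^[i] x ≠ H.c0) {C : Set X}
    (hC : C ∈ arms x) : ∃ D, MapsLocalArm H.f^[n] x C D := by
  induction n with
  | zero => exact ⟨C, .refl hC⟩
  | succ n ih =>
    obtain ⟨D, hD⟩ := ih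
    obtain ⟨E, hE⟩ := H.exists_mapsLocalArm_f (hx n) hD.2.1
    exact ⟨E, hD.iterate_add (b := 1) H.cont hE⟩

theorem mapsLocalArm_iterate_injective (n : ℕ) {x : X} (hx : ∀ i, H.f^[i] x ≠ H.c0)
    {C C' D : Set X} (h : MapsLocalArm H.f^[n] x C D) (h' : MapsLocalArm H.f^[n] x C' D) :
    C = C' := by
  induction n generalizing D with
  | zero => rw [H.mapsLocalArm_unique (.refl h.1) h, H.mapsLocalArm_unique (.refl h'.1) h']
  | succ n ih =>
    obtain ⟨E, hE⟩ := H.exists_mapsLocalArm_iterate n hx h.1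
    obtain ⟨E', hE'⟩ := H.exists_mapsLocalArm_iterate n hx h'.1
    obtain ⟨F, hF⟩ := H.exists_mapsLocalArm_f (hx n) hE.2.1
    obtain ⟨F', hF'⟩ := H.exists_mapsLocalArm_f (hx n) hE'.2.1
    obtain rfl := H.mapsLocalArm_unique (hE.iterate_add (b := 1) H.cont hF) h
    obtain rfl := H.mapsLocalArm_unique (hE'.iterate_add (b := 1) H.cont hF') h'
    obtain rfl := H.mapsLocalArm_f_injective (hx n) hF hF'
    exact ih hE hE'

theorem isEndpoint_of_isEndpoint_f {x : X} (hx : x ≠ H.c0) (h : IsEndpoint (H.f x)) :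
    IsEndpoint x := by
  refine isEndpoint_of_subsingleton_arms hx.symm fun C hC C' hC' => ?_
  obtain ⟨D, hD⟩ := H.exists_mapsLocalArm_f hx hC
  obtain ⟨D', hD'⟩ := H.exists_mapsLocalArm_f hx hC'
  obtain rfl := h.subsingleton_arms hD.2.1 hD'.2.1
  exact H.mapsLocalArm_f_injective hx hD hD'

theorem isEndpoint_c1 : IsEndpoint H.c1 := by
  have := H.t2
  have := H.compact
  have := H.conn
  by_contra hc1
  have horbit : ∀ k, H.f^[k] H.c0 = H.c0 ∨ ¬ IsEndpoint (H.f^[k] H.c0) := by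
    intro k
    induction k with
    | zero => exact .inl rfl
    | succ k ih =>
      rw [Function.iterate_succ_apply']
      by_cases hk : H.f^[k] H.c0 = H.c0
      · exact .inr (hk.symm ▸ hc1)
      · exact .inr (mt (H.isEndpoint_of_isEndpoint_f hk) (ih.resolve_left hk))
  obtain ⟨e, hec, he⟩ := exists_isEndpoint_mem_armTo H.arms_finite H.c1_ne_c0
  obtain ⟨k, rfl⟩ := H.endpoints_on_orbit e he
  exact (horbit k).resolve_left (ne_of_mem_armTo hec) he

-- The images of the arms at `c₀` all start with the only arm at `c₁`, so a point of it close
-- to `c₁` has a preimage on every arm at `c₀`.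
theorem armTo_c0_eq_or_eq_or_eq {a b c : X} (ha : a ≠ H.c0) (hb : b ≠ H.c0) (hc : c ≠ H.c0) :
    armTo H.c0 a = armTo H.c0 b ∨ armTo H.c0 a = armTo H.c0 c ∨
      armTo H.c0 b = armTo H.c0 c := by
  have hne : ∀ u, u ≠ H.c0 → H.f u ≠ H.c1 := fun u hu => (H.f_ne_f hu.symm fun _ => .inl rfl).symm
  obtain ⟨v, hv, hva, hvb⟩ := H.toTree.exists_ne_mem_arc_mem_arc
    (H.toTree.notMem_arc_of_isEndpoint H.isEndpoint_c1 (hne a ha) (hne b hb))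
  obtain ⟨w, hw, hwv, hwc⟩ := H.toTree.exists_ne_mem_arc_mem_arc
    (H.toTree.notMem_arc_of_isEndpoint H.isEndpoint_c1 hv (hne c hc))
  have hpre : ∀ u, w ∈ H.toTree.arc H.c1 (H.f u) →
      ∃ p, H.f p = w ∧ armTo H.c0 p = armTo H.c0 u := by
    intro u hwu
    rw [c1, ← (H.injOn_arc_and_image_arc (x := H.c0) fun _ => .inl rfl).2] at hwu
    obtain ⟨p, hp, rfl⟩ := hwu
    exact ⟨p, rfl, H.toTree.armTo_eq_of_mem_arc hp fun h => hw (congrArg H.f h)⟩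
  obtain ⟨a', ha', hawa⟩ := hpre a (H.toTree.arc_subset_arc_left hva hwv)
  obtain ⟨b', hb', hawb⟩ := hpre b (H.toTree.arc_subset_arc_left hvb hwv)
  obtain ⟨c', hc', hawc⟩ := hpre c hwc
  rw [← hawa, ← hawb, ← hawc]
  obtain ⟨p, q, hpq⟩ := H.two_preimages w
  rcases hpq ha' with rfl | rfl <;> rcases hpq hb' with rfl | rfl <;>
    rcases hpq hc' with rfl | rfl <;> simp

theorem symOf_eq_star_iff {x : X} : H.symOf x = Sym.star ↔ x = H.c0 := by
  unfold symOf
  split_ifs with h <;> simp [h]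

theorem symOf_eq_iff_armTo_eq {x y : X} (hx : x ≠ H.c0) (hy : y ≠ H.c0) :
    H.symOf x = H.symOf y ↔ armTo H.c0 x = armTo H.c0 y := by
  have hT1 : ∀ u, u ≠ H.c0 → (u ∈ H.T1 ↔ armTo H.c0 u = armTo H.c0 H.c1) := fun u hu =>
    mem_armTo_iff hu
  have hthree := H.armTo_c0_eq_or_eq_or_eq hx hy H.c1_ne_c0
  simp only [symOf, hx, hy, if_false, hT1 x hx, hT1 y hy]
  grind

theorem symOf_eq_iff_notMem_arc {x y : X} (hx : x ≠ H.c0) :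
    H.symOf x = H.symOf y ↔ H.c0 ∉ H.toTree.arc x y := by
  rcases eq_or_ne y H.c0 with rfl | hy
  · have hstar : H.symOf x ≠ H.symOf H.c0 := by
      rw [H.symOf_eq_star_iff.2 rfl]
      exact mt H.symOf_eq_star_iff.1 hx
    exact iff_of_false hstar (not_not.2 (H.toTree.right_mem_arc x H.c0))
  rw [H.symOf_eq_iff_armTo_eq hx hy]
  exact ⟨fun h hmem => H.toTree.armTo_ne_of_mem_arc hmem hx.symm hy.symm h,
    H.toTree.armTo_eq_of_notMem_arc⟩

end HubbardTree

/-! ### Combinatorics of `ρ` -/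

section Sequences

open Set

/-- The 1-indexed sequences `a` and `b` differ for the first time at the index `k`; their values
at `0` are ignored. -/
def FirstDiffAt {α : Type*} (a b : ℕ → α) (k : ℕ) : Prop :=
  1 ≤ k ∧ a k ≠ b k ∧ EqOn a b (Ico 1 k)

theorem eqOn_Icc_or_exists_firstDiffAt {α : Type*} (a b : ℕ → α) (n : ℕ) :
    EqOn a b (Icc 1 n) ∨ ∃ k ≤ n, FirstDiffAt a b k := by
  induction n with
  | zero => exact .inl fun i hi => by simp at hi
  | succ n ih =>
    rcases ih with heq | ⟨k, hk, hdiff⟩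
    · by_cases hn : a (n + 1) = b (n + 1)
      · refine .inl fun i hi => ?_
        rcases hi.2.eq_or_lt with rfl | hlt
        · exact hn
        · exact heq ⟨hi.1, Nat.lt_succ_iff.1 hlt⟩
      · exact .inr ⟨n + 1, le_rfl, n.succ_pos, hn, fun i hi => heq ⟨hi.1, Nat.lt_succ_iff.1 hi.2⟩⟩
    · exact .inr ⟨k, hk.trans n.le_succ, hdiff⟩

theorem periodic_of_dvd_of_forall_add_lt {α : Type*} {a : ℕ → α} {k m : ℕ}
    (ha : Function.Periodic a m) (hm : 1 ≤ m) (hkm : k ∣ m)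
    (h : ∀ i, i + k < m → a (i + k) = a i) : Function.Periodic a k := by
  have hmod_lt : ∀ i < m, a (i % k) = a i := by
    intro i
    induction i using Nat.strong_induction_on with
    | _ i ih =>
      intro hi
      rcases lt_or_ge i k with hik | hki
      · rw [Nat.mod_eq_of_lt hik]
      · have hk : 1 ≤ k := Nat.pos_of_dvd_of_pos hkm hm
        obtain ⟨j, rfl⟩ := Nat.exists_eq_add_of_le' hki
        rw [Nat.add_mod_right, ih j (by lia) (by lia), h j hi]
  have hmod : ∀ i, a (i % k) = a i := fun i => by
    rw [← Nat.mod_mod_of_dvd i hkm, hmod_lt _ (Nat.mod_lt i hm), ha.map_mod_nat]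
  intro i
  rw [← hmod (i + k), Nat.add_mod_right, hmod]

theorem exists_eq_mul_add {m n : ℕ} (hm : 1 ≤ m) (hn : 1 ≤ n) :
    ∃ q r, 1 ≤ r ∧ r ≤ m ∧ n = m * q + r := by
  obtain ⟨n, rfl⟩ := Nat.exists_eq_add_of_le' hn
  exact ⟨n / m, n % m + 1, by lia, Nat.mod_lt n hm, by rw [← add_assoc, Nat.div_add_mod]⟩

variable {ν : ℕ → Sym} {k m n : ℕ}

theorem coe_lt_rho_iff : (m : ℕ∞) < rho ν n ↔ ∀ i, 1 ≤ i → n + i ≤ m → ν (n + i) = ν i := by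
  rw [← ENat.add_one_le_iff (ENat.natCast_ne_top m), rho, le_sInf_iff]
  constructor
  · intro h i hi him
    by_contra hne
    have := h _ ⟨n + i, rfl, by lia, by rwa [Nat.add_sub_cancel_left]⟩
    norm_cast at this
    lia
  · rintro h _ ⟨j, rfl, hnj, hj⟩
    obtain ⟨i, rfl⟩ := Nat.exists_eq_add_of_lt hnj
    by_contra hlt
    norm_cast at hlt
    rw [add_assoc, Nat.add_sub_cancel_left] at hj
    exact hj (h (i + 1) i.succ_pos (by lia))

theorem FirstDiffAt.rho_eq (h : FirstDiffAt (fun i => ν (n + i)) ν k) :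
    rho ν n = ((n + k : ℕ) : ℕ∞) := by
  obtain ⟨hk, hne, heq⟩ := h
  refine le_antisymm (not_lt.1 fun hlt => hne (coe_lt_rho_iff.1 hlt k hk le_rfl)) ?_
  obtain ⟨k, rfl⟩ := Nat.exists_eq_add_of_le' hk
  rw [← add_assoc, Nat.cast_add, Nat.cast_one, ENat.add_one_le_iff (ENat.natCast_ne_top _)]
  exact coe_lt_rho_iff.2 fun i hi hik => heq ⟨hi, by lia⟩

theorem FirstDiffAt.rho_eq_of_periodic {a : ℕ → Sym} (h : FirstDiffAt a ν n)
    (ha : ∀ i, 1 ≤ i → a (m + i) = a i) (hm : 1 ≤ m) (hmn : m < n) : rho ν m = (n : ℕ∞) := by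
  obtain ⟨hn, hne, heq⟩ := h
  obtain ⟨k, rfl⟩ := Nat.exists_eq_add_of_lt hmn
  refine FirstDiffAt.rho_eq (k := k + 1) ⟨k.succ_pos, fun hk => hne ?_, fun i hi => ?_⟩
  · exact (ha (k + 1) k.succ_pos).trans ((heq ⟨k.succ_pos, by lia⟩).trans hk.symm)
  · have him : i < k + 1 := hi.2
    exact (heq ⟨by lia, by lia⟩).symm.trans ((ha i hi.1).trans (heq ⟨hi.1, by lia⟩))

theorem RhoOrbit.le (h : RhoOrbit ν k m) : k ≤ m := by
  induction h with
  | refl => exact le_rfl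
  | @step i j _ hij ih =>
    have hlt : (i : ℕ∞) < rho ν i := coe_lt_rho_iff.2 fun l hl hil => by lia
    rw [hij, Nat.cast_lt] at hlt
    exact ih.trans hlt.le

theorem RhoOrbit.eq_or_exists_rho_eq (h : RhoOrbit ν k m) :
    k = m ∨ ∃ j : ℕ, rho ν k = (j : ℕ∞) ∧ RhoOrbit ν j m := by
  induction h with
  | refl => exact .inl rfl
  | step _ hij ih =>
    rcases ih with rfl | ⟨j, hj, hjm⟩
    · exact .inr ⟨_, hij, .refl _⟩
    · exact .inr ⟨j, hj, hjm.step hij⟩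

theorem RhoOrbit.of_rho_eq (hkn : rho ν k = (n : ℕ∞)) (h : RhoOrbit ν n m) : RhoOrbit ν k m := by
  induction h with
  | refl => exact (RhoOrbit.refl k).step hkn
  | step _ hij ih => exact ih.step hij

theorem rhoOrbit_iff_of_rho_eq (hkn : rho ν k = (n : ℕ∞)) (hkm : k ≠ m) :
    RhoOrbit ν k m ↔ RhoOrbit ν n m := by
  refine ⟨fun h => ?_, .of_rho_eq hkn⟩
  obtain ⟨j, hj, hjm⟩ := h.eq_or_exists_rho_eq.resolve_left hkm
  rw [hkn, Nat.cast_inj] at hj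
  exact hj ▸ hjm

theorem not_rhoOrbit_of_lt_rho (hkm : k ≠ m) (h : (m : ℕ∞) < rho ν k) : ¬ RhoOrbit ν k m := by
  intro horbit
  obtain ⟨j, hj, hjm⟩ := horbit.eq_or_exists_rho_eq.resolve_left hkm
  rw [hj, Nat.cast_lt] at h
  exact hjm.le.not_gt h

end Sequences

/-! ### Itineraries -/

namespace HubbardTree

open Set

variable {X : Type*} [TopologicalSpace X] (H : HubbardTree X) {x y : X} {n : ℕ}

theorem itin_iterate (r : ℕ) (x : X) {k : ℕ} (hk : 1 ≤ k) :
    H.itin (H.f^[r] x) k = H.itin x (r + k) := by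
  rw [itin, itin, ← Function.iterate_add_apply, Nat.add_comm r, Nat.sub_add_comm hk]

theorem itin_eq_iff_notMem_arc (hx : H.f^[n] x ≠ H.c0) :
    H.itin x (n + 1) = H.itin y (n + 1) ↔ H.c0 ∉ H.toTree.arc (H.f^[n] x) (H.f^[n] y) :=
  H.symOf_eq_iff_notMem_arc hx

theorem injOn_iterate_arc_and_image_arc (hx : ∀ i, H.f^[i] x ≠ H.c0)
    (h : EqOn (H.itin x) (H.itin y) (Icc 1 n)) :
    InjOn H.f^[n] (H.toTree.arc x y) ∧
      H.f^[n] '' H.toTree.arc x y = H.toTree.arc (H.f^[n] x) (H.f^[n] y) := by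
  induction n with
  | zero => simp [InjOn]
  | succ n ih =>
    obtain ⟨hinj, himage⟩ := ih (h.mono (Icc_subset_Icc_right n.le_succ))
    have hc := (H.itin_eq_iff_notMem_arc (hx n)).1 (h ⟨n.succ_pos, le_rfl⟩)
    obtain ⟨hinj', himage'⟩ := H.injOn_arc_and_image_arc fun hmem => absurd hmem hc
    rw [Function.iterate_succ', image_comp, himage, himage']
    exact ⟨hinj'.comp hinj fun p hp => himage ▸ mem_image_of_mem _ hp, rfl⟩

theorem mapsLocalArm_iterate_of_eqOn (hx : ∀ i, H.f^[i] x ≠ H.c0) (hyx : y ≠ x)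
    (h : EqOn (H.itin x) (H.itin y) (Icc 1 n)) :
    MapsLocalArm H.f^[n] x (armTo x y) (armTo (H.f^[n] x) (H.f^[n] y)) := by
  induction n with
  | zero => exact .refl (armTo_mem_arms hyx)
  | succ n ih =>
    have heq := h.mono (Icc_subset_Icc_right n.le_succ)
    have hne : H.f^[n] y ≠ H.f^[n] x := (H.injOn_iterate_arc_and_image_arc hx heq).1.ne
      (H.toTree.right_mem_arc x y) (H.toTree.left_mem_arc x y) hyx
    have hc := (H.itin_eq_iff_notMem_arc (hx n)).1 (h ⟨n.succ_pos, le_rfl⟩)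
    rw [Function.iterate_succ_apply', Function.iterate_succ_apply']
    exact (ih heq).iterate_add (b := 1) H.cont
      (H.mapsLocalArm_f (hx n) hne fun hmem => absurd hmem hc)

-- Just before the itineraries of `x` and `y` differ, the arc between the images contains `c₀`,
-- so the arm at `x` towards `y` has become the arm towards `c₀`.
theorem mapsLocalArm_iterate_of_firstDiffAt (hx : ∀ i, H.f^[i] x ≠ H.c0) (hyx : y ≠ x)
    (h : FirstDiffAt (H.itin x) (H.itin y) n) :
    MapsLocalArm H.f^[n] x (armTo x y) (armTo (H.f^[n] x) H.c1) := by
  obtain ⟨hn, hdiff, heq⟩ := h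
  obtain ⟨n, rfl⟩ := Nat.exists_eq_add_of_le' hn
  have hc : H.c0 ∈ H.toTree.arc (H.f^[n] x) (H.f^[n] y) := by
    by_contra hc
    exact hdiff ((H.itin_eq_iff_notMem_arc (hx n)).2 hc)
  have hn := H.mapsLocalArm_iterate_of_eqOn hx hyx (n := n)
    (heq.mono (Icc_subset_Ico_right n.lt_succ_self))
  rw [← H.toTree.armTo_eq_of_mem_arc hc (hx n).symm] at hn
  rw [Function.iterate_succ_apply']
  exact hn.iterate_add (b := 1) H.cont (H.mapsLocalArm_f (hx n) (hx n).symm fun _ => rfl)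

theorem exists_firstDiffAt_itin (hx : ∀ i, H.f^[i] x ≠ H.c0) (hxy : x ≠ y) (hxm : H.MarkedPt x)
    (hym : H.MarkedPt y) : ∃ k, FirstDiffAt (H.itin x) (H.itin y) k := by
  obtain ⟨n, hn⟩ := H.expansive x y hxy hxm hym
  rcases eqOn_Icc_or_exists_firstDiffAt (H.itin x) (H.itin y) (n + 1) with heq | ⟨k, -, hk⟩
  · have hc := (H.itin_eq_iff_notMem_arc (hx n)).1 (heq ⟨n.succ_pos, le_rfl⟩)
    rw [← (H.injOn_iterate_arc_and_image_arc hx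
      (heq.mono (Icc_subset_Icc_right n.le_succ))).2] at hc
    exact absurd hn hc
  · exact ⟨k, hk⟩

end HubbardTree

/-! ### Characteristic points -/

namespace HubbardTree

open Set

variable {X : Type*} [TopologicalSpace X] {H : HubbardTree X} {z : X} {k m q r : ℕ}
  {C D : Set X}

namespace IsCharacteristic

theorem armTo_c0_ne_armTo_c1 (hchar : H.IsCharacteristic z) : armTo z H.c0 ≠ armTo z H.c1 := by
  obtain ⟨Cv, Cz, hCv, hCz, hne, hc1, hc0, -⟩ := hchar
  rw [← eq_armTo_of_mem_arms hCv hc1, ← eq_armTo_of_mem_arms hCz hc0]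
  exact hne.symm

theorem armTo_iterate (hchar : H.IsCharacteristic z) (hk : H.f^[k] z ≠ z) :
    armTo z (H.f^[k] z) = armTo z H.c0 := by
  obtain ⟨-, Cz, -, hCz, -, -, hc0, horbit⟩ := hchar
  rw [← eq_armTo_of_mem_arms hCz (horbit k hk), ← eq_armTo_of_mem_arms hCz hc0]

theorem mem_arc (hchar : H.IsCharacteristic z) (hk : H.f^[k] z ≠ z) :
    z ∈ H.toTree.arc (H.f^[k] z) H.c1 :=
  H.toTree.mem_arc_of_armTo_ne (hchar.armTo_iterate hk ▸ hchar.armTo_c0_ne_armTo_c1)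

theorem iterate_ne_c1 (hchar : H.IsCharacteristic z) (k : ℕ) : H.f^[k] z ≠ H.c1 := by
  intro hk
  by_cases hz : H.f^[k] z = z
  · obtain ⟨Cv, -, hCv, -, -, hc1, -, -⟩ := hchar
    rw [eq_armTo_of_mem_arms hCv hc1] at hc1
    exact ne_of_mem_armTo hc1 (hk.symm.trans hz)
  · exact hchar.armTo_c0_ne_armTo_c1 (hk ▸ (hchar.armTo_iterate hz).symm)

theorem iterate_ne_c0 (hchar : H.IsCharacteristic z) (k : ℕ) : H.f^[k] z ≠ H.c0 := fun hk =>
  hchar.iterate_ne_c1 (k + 1) (by rw [Function.iterate_succ_apply', hk, c1])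

theorem iterate_iterate_ne_c0 (hchar : H.IsCharacteristic z) (r k : ℕ) :
    H.f^[k] (H.f^[r] z) ≠ H.c0 := by
  rw [← Function.iterate_add_apply]
  exact hchar.iterate_ne_c0 _

end IsCharacteristic

/-- The possible positions at `z`, after the remaining `m - r` steps, of the arm at `f^r(z)`
towards `c₁`: it points to `c₀` or to `c₁`, and `ρ` decides which one if the itinerary of `z`
starts with the first `m` entries of the kneading sequence. -/
def IsLandingArm (H : HubbardTree X) (z : X) (m r : ℕ) (D : Set X) : Prop :=
  (D = armTo z H.c0 ∨ D = armTo z H.c1) ∧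
    (EqOn (H.itin z) H.kneading (Icc 1 m) → (D = armTo z H.c1 ↔ RhoOrbit H.kneading r m))

theorem IsLandingArm.of_firstDiffAt (hD : H.IsLandingArm z m (r + k) D) (hrk : r + k ≤ m)
    (hdiff : FirstDiffAt (H.itin (H.f^[r] z)) H.kneading k) : H.IsLandingArm z m r D := by
  refine ⟨hD.1, fun heq => (hD.2 heq).trans ?_⟩
  obtain ⟨hk, hne, hlt⟩ := hdiff
  have hitin : ∀ i ∈ Icc 1 k, H.itin (H.f^[r] z) i = H.kneading (r + i) := fun i hi => by
    rw [H.itin_iterate r z hi.1, heq ⟨le_add_left hi.1, by have := hi.2; lia⟩]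
  have hrho : rho H.kneading r = ((r + k : ℕ) : ℕ∞) := FirstDiffAt.rho_eq
    ⟨hk, (hitin k ⟨hk, le_rfl⟩).symm.trans_ne hne,
      fun i hi => (hitin i ⟨hi.1, hi.2.le⟩).symm.trans (hlt hi)⟩
  exact (rhoOrbit_iff_of_rho_eq hrho (by lia)).symm

theorem isLandingArm_armTo_c0 (hchar : H.IsCharacteristic z) (hrm : r < m)
    (h : EqOn (H.itin (H.f^[r] z)) H.kneading (Icc 1 (m - r))) :
    H.IsLandingArm z m r (armTo z H.c0) := by
  refine ⟨.inl rfl, fun heq => iff_of_false hchar.armTo_c0_ne_armTo_c1 ?_⟩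
  refine not_rhoOrbit_of_lt_rho hrm.ne (coe_lt_rho_iff.2 fun i hi him => ?_)
  rw [← heq ⟨le_add_left hi, him⟩, ← H.itin_iterate r z hi, h ⟨hi, by lia⟩]

-- The arc `[f^r(z), c₁]` contains `z`, so its image `[z, f^{m-r}(c₁)]` contains `f^{m-r}(z)`,
-- which like every point of the orbit lies in the direction of `c₀`.
theorem mapsLocalArm_armTo_c0_of_eqOn (hper : ExactPeriod H.f z m)
    (hchar : H.IsCharacteristic z) (hr : 1 ≤ r) (hrm : r < m)
    (h : EqOn (H.itin (H.f^[r] z)) H.kneading (Icc 1 (m - r))) :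
    MapsLocalArm H.f^[m - r] (H.f^[r] z) (armTo (H.f^[r] z) H.c1) (armTo z H.c0) := by
  obtain ⟨-, hz, hexact⟩ := hper
  have hreturn : H.f^[m - r] (H.f^[r] z) = z := by
    rw [← Function.iterate_add_apply, Nat.sub_add_cancel hrm.le, hz]
  have hne : H.f^[m - r] z ≠ z := hexact (m - r) (by lia) (by lia)
  have hmem : H.f^[m - r] z ∈ H.toTree.arc z (H.f^[m - r] H.c1) := by
    have himage := (H.injOn_iterate_arc_and_image_arc (hchar.iterate_iterate_ne_c0 r) h).2
    rw [hreturn] at himage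
    exact himage ▸ mem_image_of_mem _ (hchar.mem_arc (hexact r hr hrm))
  have hmap := H.mapsLocalArm_iterate_of_eqOn (hchar.iterate_iterate_ne_c0 r)
    (hchar.iterate_ne_c1 r).symm h
  rwa [hreturn, ← H.toTree.armTo_eq_of_mem_arc hmem hne, hchar.armTo_iterate hne] at hmap

theorem exists_isLandingArm (hper : ExactPeriod H.f z m) (hchar : H.IsCharacteristic z)
    (hr : 1 ≤ r) (hrm : r ≤ m) :
    ∃ D, H.IsLandingArm z m r D ∧
      MapsLocalArm H.f^[m - r] (H.f^[r] z) (armTo (H.f^[r] z) H.c1) D := by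
  induction hd : m - r using Nat.strong_induction_on generalizing r with
  | _ d ih =>
    subst hd
    rcases hrm.eq_or_lt with rfl | hlt
    · refine ⟨armTo z H.c1, ⟨.inr rfl, fun _ => iff_of_true rfl (.refl r)⟩, ?_⟩
      rw [Nat.sub_self, hper.2.1]
      exact .refl (armTo_mem_arms (hchar.iterate_ne_c1 0).symm)
    rcases eqOn_Icc_or_exists_firstDiffAt (H.itin (H.f^[r] z)) H.kneading (m - r) with
      heq | ⟨k, hk, hdiff⟩
    · exact ⟨_, isLandingArm_armTo_c0 hchar hlt heq,
        mapsLocalArm_armTo_c0_of_eqOn hper hchar hr hlt heq⟩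
    · have hk_pos := hdiff.1
      obtain ⟨D, hland, hD⟩ := ih (m - (r + k)) (by lia) (r := r + k) (by lia) (by lia) rfl
      have hmap := H.mapsLocalArm_iterate_of_firstDiffAt (hchar.iterate_iterate_ne_c0 r)
        (hchar.iterate_ne_c1 r).symm hdiff
      rw [Nat.add_comm r k, Function.iterate_add_apply] at hD
      refine ⟨D, hland.of_firstDiffAt (by lia) hdiff, ?_⟩
      rw [show m - r = k + (m - (k + r)) by lia]
      exact hmap.iterate_add H.cont hD

theorem exists_isLandingArm_of_mapsLocalArm (hper : ExactPeriod H.f z m)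
    (hchar : H.IsCharacteristic z) (hr : 1 ≤ r) (hrm : r ≤ m)
    (hC : MapsLocalArm H.f^[m * q + r] z C (armTo (H.f^[m * q + r] z) H.c1)) :
    ∃ D, H.IsLandingArm z m r D ∧ MapsLocalArm H.f^[m * (q + 1)] z C D := by
  obtain ⟨D, hland, hD⟩ := exists_isLandingArm hper hchar hr hrm
  have hz : H.f^[r] z = H.f^[m * q + r] z := by
    rw [Nat.add_comm, Function.iterate_add_apply]
    exact congrArg _ (Function.IsPeriodicPt.mul_const hper.2.1 q).symm
  rw [hz] at hD
  refine ⟨D, hland, ?_⟩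
  rw [show m * (q + 1) = m * q + r + (m - r) by rw [Nat.mul_succ]; lia]
  exact hC.iterate_add H.cont hD

theorem exists_isLandingArm_one (hper : ExactPeriod H.f z m) (hchar : H.IsCharacteristic z) :
    ∃ D, H.IsLandingArm z m 1 D ∧ MapsLocalArm H.f^[m] z (armTo z H.c0) D := by
  have hz := hchar.iterate_ne_c0 0
  have hmap : MapsLocalArm H.f z (armTo z H.c0) (armTo (H.f z) H.c1) :=
    H.mapsLocalArm_f hz hz.symm fun _ => rfl
  simpa using exists_isLandingArm_of_mapsLocalArm (q := 0) hper hchar le_rfl hper.1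
    (by simpa using hmap)

theorem exists_mapsLocalArm_armTo_c0_or_c1 (hper : ExactPeriod H.f z m)
    (hchar : H.IsCharacteristic z) (hbranch : IsBranchPt z) (hC : C ∈ arms z) :
    ∃ j, MapsLocalArm H.f^[m * j] z C (armTo z H.c0) ∨
      MapsLocalArm H.f^[m * j] z C (armTo z H.c1) := by
  have := H.t2
  have := H.compact
  have := H.conn
  obtain ⟨a, ha, rfl⟩ := hC
  obtain ⟨e, hea, he⟩ := exists_isEndpoint_mem_armTo H.arms_finite ha
  have hez := ne_of_mem_armTo hea
  obtain ⟨n, hdiff⟩ := H.exists_firstDiffAt_itin hchar.iterate_ne_c0 hez.symm (.inl hbranch)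
    (.inr (H.endpoints_on_orbit e he))
  have hmap := H.mapsLocalArm_iterate_of_firstDiffAt hchar.iterate_ne_c0 hez hdiff
  obtain ⟨q, r, hr, hrm, rfl⟩ := exists_eq_mul_add hper.1 hdiff.1
  rw [armTo_eq_of_mem hea] at hmap
  obtain ⟨D, ⟨rfl | rfl, -⟩, hD⟩ := exists_isLandingArm_of_mapsLocalArm hper hchar hr hrm hmap
  · exact ⟨_, .inl hD⟩
  · exact ⟨_, .inr hD⟩

end HubbardTree

/-! ### Evil orbits -/

theorem exists_iterate_eq_of_forall_exists_iterate_eq {α : Type*} [Finite α] {g : α → α}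
    (hg : Function.Injective g) {a : α} (h : ∀ x, ∃ j, g^[j] x = a) (x y : α) :
    ∃ j, g^[j] x = y := by
  obtain ⟨i, hi⟩ := h x
  obtain ⟨j, hj⟩ := h y
  obtain ⟨p, hp, hper⟩ := hg.mem_periodicPts y
  refine ⟨p * j - j + i, ?_⟩
  rw [Function.iterate_add_apply, hi, ← hj, ← Function.iterate_add_apply,
    Nat.sub_add_cancel (Nat.le_mul_of_pos_left j hp)]
  exact hper.mul_const j

theorem MapsLocalArm.iterate_mul {X : Type*} [TopologicalSpace X] {f : X → X} {z : X} {m : ℕ}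
    {C : Set X} (hf : Continuous f) (hz : f^[m] z = z) (h : MapsLocalArm f^[m] z C C) (j : ℕ) :
    MapsLocalArm f^[m * j] z C C := by
  induction j with
  | zero => exact .refl h.1
  | succ j ih =>
    exact ih.iterate_add hf (by rwa [(show Function.IsPeriodicPt f m z from hz).mul_const j])

namespace HubbardTree

open Set

variable {X : Type*} [TopologicalSpace X] {H : HubbardTree X} {z : X} {m : ℕ}

theorem exists_injective_forall_mapsLocalArm (hz : H.f^[m] z = z)
    (hc0 : ∀ i, H.f^[i] z ≠ H.c0) :
    ∃ G : arms z → arms z, Function.Injective G ∧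
      ∀ (j : ℕ) (C : arms z), MapsLocalArm H.f^[m * j] z C (G^[j] C : arms z) := by
  have hreturn : ∀ C : arms z, ∃ D : arms z, MapsLocalArm H.f^[m] z C D := fun C => by
    obtain ⟨D, hD⟩ := H.exists_mapsLocalArm_iterate m hc0 C.2
    exact ⟨⟨D, by simpa only [hz] using hD.2.1⟩, hD⟩
  choose G hG using hreturn
  refine ⟨G, fun C C' hCC' => ?_, fun j C => ?_⟩
  · exact Subtype.ext (H.mapsLocalArm_iterate_injective m hc0 (hG C) (hCC' ▸ hG C'))
  · induction j with
    | zero => exact .refl C.2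
    | succ j ih =>
      rw [Function.iterate_succ_apply']
      refine ih.iterate_add H.cont ?_
      rw [(show Function.IsPeriodicPt H.f m z from hz).mul_const j]
      exact hG _

theorem armsTransitive_of_forall_exists_mapsLocalArm (hz : H.f^[m] z = z)
    (hc0 : ∀ i, H.f^[i] z ≠ H.c0) {A : Set X}
    (hA : ∀ C ∈ arms z, ∃ j, MapsLocalArm H.f^[m * j] z C A) : ArmsTransitive H.f m z := by
  intro C hC C' hC'
  obtain ⟨G, hinj, hG⟩ := exists_injective_forall_mapsLocalArm hz hc0
  have : Finite (arms z) := (H.arms_finite z).to_subtype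
  have hGA : ∀ B : arms z, ∃ j, (G^[j] B : Set X) = A := fun B =>
    (hA B B.2).imp fun j hj => H.mapsLocalArm_unique (hG j B) hj
  obtain ⟨i, hi⟩ := hGA ⟨C, hC⟩
  obtain ⟨j, hj⟩ := exists_iterate_eq_of_forall_exists_iterate_eq hinj (a := G^[i] ⟨C, hC⟩)
    (fun B => (hGA B).imp fun _ hB => Subtype.ext (hB.trans hi.symm)) ⟨C, hC⟩ ⟨C', hC'⟩
  exact ⟨j, by simpa only [hj] using hG j ⟨C, hC⟩⟩

namespace IsEvilOrbit

theorem not_mapsLocalArm_armTo_c0_armTo_c1 (hevil : H.IsEvilOrbit z m) :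
    ¬ MapsLocalArm H.f^[m] z (armTo z H.c0) (armTo z H.c1) := by
  obtain ⟨hper, hbranch, hchar, hnot⟩ := hevil
  refine fun hmap => hnot (armsTransitive_of_forall_exists_mapsLocalArm hper.2.1
    hchar.iterate_ne_c0 (A := armTo z H.c1) fun C hC => ?_)
  obtain ⟨j, hj | hj⟩ := exists_mapsLocalArm_armTo_c0_or_c1 hper hchar (hbranch 0) hC
  · refine ⟨j + 1, hj.iterate_add H.cont ?_⟩
    rwa [Function.IsPeriodicPt.mul_const hper.2.1 j]
  · exact ⟨j, hj⟩

theorem mapsLocalArm_armTo_c0 (hevil : H.IsEvilOrbit z m) (j : ℕ) :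
    MapsLocalArm H.f^[m * j] z (armTo z H.c0) (armTo z H.c0) := by
  obtain ⟨D, ⟨rfl | rfl, -⟩, hD⟩ := exists_isLandingArm_one hevil.1 hevil.2.2.1
  · exact hD.iterate_mul H.cont hevil.1.2.1 j
  · exact absurd hD hevil.not_mapsLocalArm_armTo_c0_armTo_c1

theorem not_mapsLocalArm_armTo_c1_armTo_c0 (hevil : H.IsEvilOrbit z m) (j : ℕ) :
    ¬ MapsLocalArm H.f^[m * j] z (armTo z H.c1) (armTo z H.c0) := fun hmap =>
  hevil.2.2.1.armTo_c0_ne_armTo_c1 (H.mapsLocalArm_iterate_injective _ hevil.2.2.1.iterate_ne_c0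
    (hevil.mapsLocalArm_armTo_c0 j) hmap)

theorem not_mapsLocalArm_armTo_c1_armTo_c1 (hevil : H.IsEvilOrbit z m) :
    ¬ MapsLocalArm H.f^[m] z (armTo z H.c1) (armTo z H.c1) := by
  intro hmap
  have hfix := hevil.mapsLocalArm_armTo_c0
  obtain ⟨hper, hbranch, hchar, -⟩ := hevil
  have hsub : arms z ⊆ {armTo z H.c0, armTo z H.c1} := fun C hC => by
    obtain ⟨j, hj | hj⟩ := exists_mapsLocalArm_armTo_c0_or_c1 hper hchar (hbranch 0) hC
    · exact .inl (H.mapsLocalArm_iterate_injective _ hchar.iterate_ne_c0 hj (hfix j))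
    · exact .inr (H.mapsLocalArm_iterate_injective _ hchar.iterate_ne_c0 hj
        (hmap.iterate_mul H.cont hper.2.1 j))
  have htwo := (ncard_le_ncard hsub).trans (ncard_insert_le _ _)
  rw [ncard_singleton] at htwo
  have hthree : 3 ≤ (arms z).ncard := hbranch 0
  lia

theorem exists_firstDiffAt_and_rhoOrbit (hevil : H.IsEvilOrbit z m) :
    ∃ n r, m < n ∧ FirstDiffAt (H.itin z) H.kneading n ∧
      1 ≤ r ∧ r ≤ m ∧ r ≡ n [MOD m] ∧ RhoOrbit H.kneading r m := by
  have hnot0 := hevil.not_mapsLocalArm_armTo_c1_armTo_c0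
  have hnot1 := hevil.not_mapsLocalArm_armTo_c1_armTo_c1
  obtain ⟨hper, hbranch, hchar, -⟩ := hevil
  obtain ⟨n, hdiff⟩ := H.exists_firstDiffAt_itin hchar.iterate_ne_c0 (hchar.iterate_ne_c1 0)
    (.inl (hbranch 0)) (.inr ⟨1, rfl⟩)
  have hmap := H.mapsLocalArm_iterate_of_firstDiffAt hchar.iterate_ne_c0
    (hchar.iterate_ne_c1 0).symm hdiff
  obtain ⟨q, r, hr, hrm, rfl⟩ := exists_eq_mul_add hper.1 hdiff.1
  obtain ⟨D, ⟨rfl | rfl, hrho⟩, hD⟩ := exists_isLandingArm_of_mapsLocalArm hper hchar hr hrm hmap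
  · exact absurd hD (hnot0 _)
  have hq : q ≠ 0 := by
    rintro rfl
    exact hnot1 (by simpa using hD)
  have hlt : m < m * q + r := by
    have := Nat.le_mul_of_pos_right m (Nat.pos_of_ne_zero hq)
    lia
  refine ⟨_, r, hlt, hdiff, hr, hrm, ?_, (hrho (hdiff.2.2.mono ?_)).1 rfl⟩
  · simp [Nat.ModEq]
  · exact Icc_subset_Ico_right hlt

theorem not_internalAddress (hevil : H.IsEvilOrbit z m)
    (heq : EqOn (H.itin z) H.kneading (Icc 1 m)) : ¬ InternalAddress H.kneading m := by
  obtain ⟨D, hland, hD⟩ := exists_isLandingArm_one hevil.1 hevil.2.2.1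
  refine fun haddress => hevil.not_mapsLocalArm_armTo_c0_armTo_c1 ?_
  rwa [(hland.2 heq).2 haddress] at hD

end IsEvilOrbit

theorem itin_add_of_iterate_eq (hz : H.f^[m] z = z) {i : ℕ} (hi : 1 ≤ i) :
    H.itin z (m + i) = H.itin z i := by
  rw [← H.itin_iterate m z hi, hz]

-- Otherwise the itineraries of `z` and `f^k(z)` coincide, against expansivity.
theorem rho_le_of_dvd (hper : ExactPeriod H.f z m) (hc0 : ∀ i, H.f^[i] z ≠ H.c0)
    (hbranch : ∀ i, IsBranchPt (H.f^[i] z)) (heq : EqOn (H.itin z) H.kneading (Icc 1 m))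
    {k : ℕ} (hkm : k ∣ m) (hk : 1 ≤ k) (hlt : k < m) : rho H.kneading k ≤ m := by
  by_contra hrho
  rw [not_le, coe_lt_rho_iff] at hrho
  have hperiodic : Function.Periodic (fun i => H.itin z (i + 1)) k := by
    refine periodic_of_dvd_of_forall_add_lt (m := m) (fun i => ?_) hper.1 hkm fun i hi => ?_
    · rw [add_right_comm, add_comm _ m, itin_add_of_iterate_eq hper.2.1 i.succ_pos]
    · rw [add_right_comm, add_comm _ k, heq ⟨by lia, by lia⟩, heq ⟨by lia, by lia⟩,
        hrho (i + 1) i.succ_pos (by lia)]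
  obtain ⟨n, hn, hne, -⟩ := H.exists_firstDiffAt_itin hc0 (hper.2.2 k hk hlt).symm
    (.inl (hbranch 0)) (.inl (hbranch k))
  obtain ⟨i, rfl⟩ := Nat.exists_eq_add_of_le' hn
  refine hne ((hperiodic i).symm.trans ?_)
  rw [H.itin_iterate k z i.succ_pos]
  exact congrArg (H.itin z) (by lia)

end HubbardTree

/-- Proposition 5.16, "Evil Orbit Fails Admissibility Condition".
If a Hubbard tree has an evil orbit of branch points of exact period `m` and its
kneading sequence is not `*`-periodic of period less than `m`, then the kneading
sequence fails the admissibility condition for period `m`. -/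
theorem evil_orbit_fails_admissibility
    {X : Type*} [TopologicalSpace X] (H : HubbardTree X) (z : X) (m : ℕ)
    (hevil : H.IsEvilOrbit z m)
    (hnotstar : ¬ ∃ p : ℕ, p < m ∧ StarPeriodic H.kneading p) :
    FailsAdmissibility H.kneading m := by
  obtain ⟨n, r, hmn, hdiff, hr, hrm, hmod, horbit⟩ := hevil.exists_firstDiffAt_and_rhoOrbit
  have heq : Set.EqOn (H.itin z) H.kneading (Set.Icc 1 m) :=
    hdiff.2.2.mono (Set.Icc_subset_Ico_right hmn)
  have haddress := hevil.not_internalAddress heq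
  obtain ⟨hper, hbranch, hchar, -⟩ := hevil
  have hrho : rho H.kneading m = n :=
    hdiff.rho_eq_of_periodic (fun _ => HubbardTree.itin_add_of_iterate_eq hper.2.1) hper.1 hmn
  exact ⟨hper.1, haddress,
    fun _ => HubbardTree.rho_le_of_dvd hper hchar.iterate_ne_c0 hbranch heq,
    n, r, hrho, hr, hrm, hmod, horbit⟩

end HubbardTrees
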